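/- Assume Case 3. (i) If (A8)⁺ holds, then for every η ∈ (0,η₀] the functions α_η⁺(s) and β_η⁺(s) converge to 1 as s → ∞. (ii) If (A8)⁻ holds, then for every η ∈ (0,η₀] the functions α_η⁻(s) and β_η⁻(s) converge to 1 as s → ∞. -/

import Mathlib

open MeasureTheory Filter Topology Set

noncomputable section

/-- Euclidean space `ℝ^n`; the torus `𝕋^n` is modelled by `ℤ^n`-periodic functions on it. -/
abbrev En (n : ℕ) : Type := EuclideanSpace ℝ (Fin n)

/-- The integer vector `k ∈ ℤ^n` viewed as an element of `ℝ^n`. -/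
def intVec (n : ℕ) (k : Fin n → ℤ) : En n := WithLp.toLp 2 (fun i => (k i : ℝ))

/-- A `ℤ^n`-periodic function on `ℝ^n`, i.e. a function on the torus `𝕋^n`. -/
def ZPeriodic {n : ℕ} (f : En n → ℝ) : Prop :=
  ∀ (x : En n) (k : Fin n → ℤ), f (x + intVec n k) = f x

/-- A Hamiltonian `H : 𝕋^n × ℝ^n → ℝ` (periodic in the first variable). -/
def ZPeriodicH {n : ℕ} (H : En n → En n → ℝ) : Prop :=
  ∀ (x : En n) (k : Fin n → ℤ) (p : En n), H (x + intVec n k) p = H x p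

/-- A function on `𝕋^n × ℝ` (space-time, periodic in space). -/
def ZPeriodicST {n : ℕ} (u : En n × ℝ → ℝ) : Prop :=
  ∀ (x : En n) (k : Fin n → ℤ) (t : ℝ), u (x + intVec n k, t) = u (x, t)

/-- (A1): coercivity, `lim_{r→∞} inf{H(x,p) : x ∈ 𝕋^n, |p| ≥ r} = ∞`. -/
def Coercive {n : ℕ} (H : En n → En n → ℝ) : Prop :=
  ∀ M : ℝ, ∃ r : ℝ, ∀ (x p : En n), r ≤ ‖p‖ → M ≤ H x p

/-- Coercivity for an `x`-independent Hamiltonian. -/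
def CoerciveP {n : ℕ} (H : En n → ℝ) : Prop :=
  ∀ M : ℝ, ∃ r : ℝ, ∀ p : En n, r ≤ ‖p‖ → M ≤ H p

/-- Lipschitz continuity (membership in `W^{1,∞}`). -/
def IsLip {n : ℕ} (f : En n → ℝ) : Prop := ∃ K : NNReal, LipschitzWith K f

/-- Viscosity subsolution inequality for one stationary equation
`H(x, Dw) + c (w - wo) ≤ ρ(x)` of a weakly coupled system. -/
def StatSubIneq {n : ℕ} (H : En n → En n → ℝ) (c : ℝ) (w wo : En n → ℝ) (ρ : En n → ℝ) : Prop :=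
  ∀ φ : En n → ℝ, ContDiff ℝ 1 φ →
    ∀ x₀ : En n, IsLocalMax (fun x => w x - φ x) x₀ →
      H x₀ (gradient φ x₀) + c * (w x₀ - wo x₀) ≤ ρ x₀

/-- Viscosity supersolution inequality for one stationary equation. -/
def StatSuperIneq {n : ℕ} (H : En n → En n → ℝ) (c : ℝ) (w wo : En n → ℝ) (ρ : En n → ℝ) : Prop :=
  ∀ φ : En n → ℝ, ContDiff ℝ 1 φ →
    ∀ x₀ : En n, IsLocalMin (fun x => w x - φ x) x₀ →
      ρ x₀ ≤ H x₀ (gradient φ x₀) + c * (w x₀ - wo x₀)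

/-- Viscosity subsolution of the stationary system
`Hᵢ(x, Dwᵢ) + cᵢ (wᵢ - wⱼ) = ρᵢ(x)`, `i = 1,2`. -/
def CellSub {n : ℕ} (H₁ H₂ : En n → En n → ℝ) (c₁ c₂ : ℝ) (w₁ w₂ : En n → ℝ)
    (ρ₁ ρ₂ : En n → ℝ) : Prop :=
  StatSubIneq H₁ c₁ w₁ w₂ ρ₁ ∧ StatSubIneq H₂ c₂ w₂ w₁ ρ₂

/-- Viscosity supersolution of the stationary system. -/
def CellSuper {n : ℕ} (H₁ H₂ : En n → En n → ℝ) (c₁ c₂ : ℝ) (w₁ w₂ : En n → ℝ)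
    (ρ₁ ρ₂ : En n → ℝ) : Prop :=
  StatSuperIneq H₁ c₁ w₁ w₂ ρ₁ ∧ StatSuperIneq H₂ c₂ w₂ w₁ ρ₂

/-- Viscosity solution (continuous, sub- and supersolution) of the stationary system. -/
def CellSolution {n : ℕ} (H₁ H₂ : En n → En n → ℝ) (c₁ c₂ : ℝ) (v₁ v₂ : En n → ℝ)
    (ρ₁ ρ₂ : En n → ℝ) : Prop :=
  Continuous v₁ ∧ Continuous v₂ ∧
    CellSub H₁ H₂ c₁ c₂ v₁ v₂ ρ₁ ρ₂ ∧ CellSuper H₁ H₂ c₁ c₂ v₁ v₂ ρ₁ ρ₂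

/-- Subsolution of the ergodic problem (E) with constant `c` (coupling constants 1). -/
def ErgSub {n : ℕ} (H₁ H₂ : En n → En n → ℝ) (v₁ v₂ : En n → ℝ) (c : ℝ) : Prop :=
  CellSub H₁ H₂ 1 1 v₁ v₂ (fun _ => c) (fun _ => c)

/-- Supersolution of the ergodic problem (E). -/
def ErgSuper {n : ℕ} (H₁ H₂ : En n → En n → ℝ) (v₁ v₂ : En n → ℝ) (c : ℝ) : Prop :=
  CellSuper H₁ H₂ 1 1 v₁ v₂ (fun _ => c) (fun _ => c)

/-- Viscosity solution of the ergodic problem (E):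
`H₁(x,Dv₁) + v₁ - v₂ = c`, `H₂(x,Dv₂) + v₂ - v₁ = c` on `𝕋^n`. -/
def ErgSolution {n : ℕ} (H₁ H₂ : En n → En n → ℝ) (v₁ v₂ : En n → ℝ) (c : ℝ) : Prop :=
  CellSolution H₁ H₂ 1 1 v₁ v₂ (fun _ => c) (fun _ => c)

/-- Viscosity subsolution inequality for one evolution equation
`∂ₜ u + H(x, Du) + u - uo ≤ 0` in `𝕋^n × (0,∞)`. -/
def EvolSubIneq {n : ℕ} (H : En n → En n → ℝ) (u uo : En n × ℝ → ℝ) : Prop :=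
  ∀ φ : En n × ℝ → ℝ, ContDiff ℝ 1 φ →
    ∀ (x₀ : En n) (t₀ : ℝ), 0 < t₀ →
      IsLocalMax (fun q => u q - φ q) (x₀, t₀) →
      fderiv ℝ φ (x₀, t₀) (0, 1) + H x₀ (gradient (fun y => φ (y, t₀)) x₀)
        + u (x₀, t₀) - uo (x₀, t₀) ≤ 0

/-- Viscosity supersolution inequality for one evolution equation. -/
def EvolSuperIneq {n : ℕ} (H : En n → En n → ℝ) (u uo : En n × ℝ → ℝ) : Prop :=
  ∀ φ : En n × ℝ → ℝ, ContDiff ℝ 1 φ →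
    ∀ (x₀ : En n) (t₀ : ℝ), 0 < t₀ →
      IsLocalMin (fun q => u q - φ q) (x₀, t₀) →
      0 ≤ fderiv ℝ φ (x₀, t₀) (0, 1) + H x₀ (gradient (fun y => φ (y, t₀)) x₀)
        + u (x₀, t₀) - uo (x₀, t₀)

/-- Viscosity subsolution of system (C) (with coupling constants `c₁ = c₂ = 1`). -/
def SysSub {n : ℕ} (H₁ H₂ : En n → En n → ℝ) (u₁ u₂ : En n × ℝ → ℝ) : Prop :=
  EvolSubIneq H₁ u₁ u₂ ∧ EvolSubIneq H₂ u₂ u₁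

/-- Viscosity supersolution of system (C). -/
def SysSuper {n : ℕ} (H₁ H₂ : En n → En n → ℝ) (u₁ u₂ : En n × ℝ → ℝ) : Prop :=
  EvolSuperIneq H₁ u₁ u₂ ∧ EvolSuperIneq H₂ u₂ u₁

/-- Viscosity solution of the Cauchy problem (C): continuous on `𝕋^n × [0,∞)`,
sub- and supersolution, attaining the initial data. -/
def SysSolution {n : ℕ} (H₁ H₂ : En n → En n → ℝ) (u₀₁ u₀₂ : En n → ℝ)
    (u₁ u₂ : En n × ℝ → ℝ) : Prop :=
  ContinuousOn u₁ {q : En n × ℝ | 0 ≤ q.2} ∧ ContinuousOn u₂ {q : En n × ℝ | 0 ≤ q.2} ∧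
    SysSub H₁ H₂ u₁ u₂ ∧ SysSuper H₁ H₂ u₁ u₂ ∧
    (∀ x, u₁ (x, 0) = u₀₁ x) ∧ (∀ x, u₂ (x, 0) = u₀₂ x)

/-- Viscosity subsolution of the single stationary equation `H(x,Dv) ≤ c` on `𝕋^n`. -/
def SingleSub {n : ℕ} (H : En n → En n → ℝ) (v : En n → ℝ) (c : ℝ) : Prop :=
  ∀ φ : En n → ℝ, ContDiff ℝ 1 φ →
    ∀ x₀ : En n, IsLocalMax (fun x => v x - φ x) x₀ → H x₀ (gradient φ x₀) ≤ c

/-- Viscosity supersolution of the single stationary equation `H(x,Dv) ≥ c` on `𝕋^n`. -/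
def SingleSuper {n : ℕ} (H : En n → En n → ℝ) (v : En n → ℝ) (c : ℝ) : Prop :=
  ∀ φ : En n → ℝ, ContDiff ℝ 1 φ →
    ∀ x₀ : En n, IsLocalMin (fun x => v x - φ x) x₀ → c ≤ H x₀ (gradient φ x₀)

/-- Viscosity solution of the single stationary equation `H(x,Dv) = c` on `𝕋^n`. -/
def SingleSolution {n : ℕ} (H : En n → En n → ℝ) (v : En n → ℝ) (c : ℝ) : Prop :=
  Continuous v ∧ SingleSub H v c ∧ SingleSuper H v c

/-- Uniform convergence `u(·,t) → v` on `𝕋^n` as `t → ∞`. -/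
def UnifTendsTo {n : ℕ} (u : En n × ℝ → ℝ) (v : En n → ℝ) : Prop :=
  ∀ ε : ℝ, 0 < ε → ∃ T : ℝ, ∀ t : ℝ, T ≤ t → ∀ x : En n, |u (x, t) - v x| ≤ ε

/-- (A8)⁺ at level `η` with constant `ψ`. -/
def A8plusAt {n : ℕ} (H : En n → En n → ℝ) (η ψ : ℝ) : Prop :=
  ∀ (x p q : En n), η ≤ H x (p + q) → H x q ≤ 0 →
    ∀ μ : ℝ, 0 < μ → μ ≤ 1 → H x (p + q) + ψ * (1 - μ) ≤ μ * H x (μ⁻¹ • p + q)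

/-- (A8)⁻ at level `η` with constant `ψ`. -/
def A8minusAt {n : ℕ} (H : En n → En n → ℝ) (η ψ : ℝ) : Prop :=
  ∀ (x p q : En n), H x (p + q) ≤ -η → 0 ≤ H x q →
    ∀ μ : ℝ, 1 ≤ μ → μ * H x (μ⁻¹ • p + q) ≤ H x (p + q) - ψ * (μ - 1) / μ

/-- (A8)⁺ with threshold `η₀`. -/
def A8plus {n : ℕ} (H : En n → En n → ℝ) (η₀ : ℝ) : Prop :=
  ∀ η : ℝ, 0 < η → η ≤ η₀ → ∃ ψ : ℝ, 0 < ψ ∧ A8plusAt H η ψ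

/-- (A8)⁻ with threshold `η₀`. -/
def A8minus {n : ℕ} (H : En n → En n → ℝ) (η₀ : ℝ) : Prop :=
  ∀ η : ℝ, 0 < η → η ≤ η₀ → ∃ ψ : ℝ, 0 < ψ ∧ A8minusAt H η ψ

/-- The function `F` of the Key Lemma: `F(r) = C r` for `r ≥ 0`, `F(r) = r / C` for `r < 0`. -/
def Fc (C r : ℝ) : ℝ := if 0 ≤ r then C * r else r / C

/-- `α_η⁺(s)` (resp. `β_η⁺(s)` with `u = u₂`):
`min_{x ∈ 𝕋^n, t ≥ s} (u(x,t) - v(x) + η (t-s)) / (u(x,s) - v(x))`. -/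
def alphaPlus {n : ℕ} (u : En n × ℝ → ℝ) (v : En n → ℝ) (η s : ℝ) : ℝ :=
  sInf {r : ℝ | ∃ (x : En n) (t : ℝ), s ≤ t ∧
    r = (u (x, t) - v x + η * (t - s)) / (u (x, s) - v x)}

/-- `α_η⁻(s)` (resp. `β_η⁻(s)` with `u = u₂`):
`max_{x ∈ 𝕋^n, t ≥ s} (u(x,t) - v(x) - η (t-s)) / (u(x,s) - v(x))`. -/
def alphaMinus {n : ℕ} (u : En n × ℝ → ℝ) (v : En n → ℝ) (η s : ℝ) : ℝ :=
  sSup {r : ℝ | ∃ (x : En n) (t : ℝ), s ≤ t ∧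
    r = (u (x, t) - v x - η * (t - s)) / (u (x, s) - v x)}

/-- (A9)⁺. -/
def A9plus {n : ℕ} (H : En n → En n → ℝ) : Prop :=
  ∃ K : Set (En n), IsClosed K ∧ (∀ x ∈ K, ∀ k : Fin n → ℤ, x + intVec n k ∈ K) ∧
    (∀ x ∈ K, (∀ p : En n, 0 ≤ H x p) ∧ ∃ p : En n, H x p = 0) ∧
    (∀ ε : ℝ, 0 < ε → ∃ η₀ : ℝ, 0 < η₀ ∧ ∃ ψ : ℝ → ℝ, (∀ r : ℝ, 0 < r → 0 < ψ r) ∧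
      ∀ η : ℝ, 0 < η → η ≤ η₀ → ∀ (x p q : En n), ε ≤ Metric.infDist x K →
        η ≤ H x (p + q) → H x q ≤ 0 →
        ∀ μ : ℝ, 0 < μ → μ ≤ 1 → H x (p + q) + ψ η * (1 - μ) ≤ μ * H x (μ⁻¹ • p + q))

/-- (A9)⁻. -/
def A9minus {n : ℕ} (H : En n → En n → ℝ) : Prop :=
  ∃ K : Set (En n), IsClosed K ∧ (∀ x ∈ K, ∀ k : Fin n → ℤ, x + intVec n k ∈ K) ∧
    (∀ x ∈ K, (∀ p : En n, 0 ≤ H x p) ∧ ∃ p : En n, H x p = 0) ∧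
    (∀ ε : ℝ, 0 < ε → ∃ η₀ : ℝ, 0 < η₀ ∧ ∃ ψ : ℝ → ℝ, (∀ r : ℝ, 0 < r → 0 < ψ r) ∧
      ∀ η : ℝ, 0 < η → η ≤ η₀ → ∀ (x p q : En n), ε ≤ Metric.infDist x K →
        H x (p + q) ≤ -η → 0 ≤ H x q →
        ∀ μ : ℝ, 1 ≤ μ → μ * H x (μ⁻¹ • p + q) ≤ H x (p + q) - ψ η * (μ - 1) / μ)

/-- (A6): uniform convexity of an `x`-independent Hamiltonian. -/
def UnifConvex {n : ℕ} (H : En n → ℝ) : Prop :=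
  ∃ α : ℝ, 0 < α ∧ ∀ᵐ q : En n ∂volume, DifferentiableAt ℝ H q ∧
    ∀ p : En n, H q + fderiv ℝ H q (p - q) + α * ‖p - q‖ ^ 2 ≤ H p

end

lemma grad_sq {n : ℕ} (c : ℝ) (d x : En n) :
    HasGradientAt (fun y : En n => c * ‖y - d‖ ^ 2) ((2 * c) • (x - d)) x := by
  rw [hasGradientAt_iff_hasFDerivAt]
  have h1 : HasFDerivAt (fun y : En n => y - d) (ContinuousLinearMap.id ℝ (En n)) x :=
    (hasFDerivAt_id x).sub_const d
  have h2 := (h1.norm_sq).const_mul c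
  refine h2.congr_fderiv ?_
  ext y
  simp [InnerProductSpace.toDual_apply_apply]
  ring

lemma cd_sq {n : ℕ} (c : ℝ) (d : En n) :
    ContDiff ℝ 1 (fun y : En n => c * ‖y - d‖ ^ 2) :=
  contDiff_const.mul ((contDiff_id.sub contDiff_const).norm_sq ℝ)

lemma test_derivs {n : ℕ} {P : En n → ℝ} {g : ℝ → ℝ} {x : En n} {t : ℝ} {gx : En n} {g' : ℝ}
    (hgx : HasGradientAt P gx x) (hg' : HasDerivAt g g' t) :
    fderiv ℝ (fun q : En n × ℝ => P q.1 + g q.2) (x, t) (0, 1) = g' ∧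
    gradient (fun y => (fun q : En n × ℝ => P q.1 + g q.2) (y, t)) x = gx := by
  constructor
  · have h1 : HasFDerivAt (fun q : En n × ℝ => P q.1) _ (x, t) :=
      HasFDerivAt.comp (g := P) (x, t) hgx.hasFDerivAt hasFDerivAt_fst
    have h2 : HasFDerivAt (fun q : En n × ℝ => g q.2) _ (x, t) :=
      HasFDerivAt.comp (g := g) (x, t) hg'.hasFDerivAt hasFDerivAt_snd
    have h3 : HasFDerivAt (fun q : En n × ℝ => P q.1 + g q.2) _ (x, t) := h1.add h2
    rw [h3.fderiv]
    simp
  · have : HasGradientAt (fun y => P y + g t) gx x := by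
      rw [hasGradientAt_iff_hasFDerivAt] at hgx ⊢
      exact hgx.add_const _
    exact this.gradient

lemma sub_test {n : ℕ} {H : En n → En n → ℝ} {u uo : En n × ℝ → ℝ} (hs : EvolSubIneq H u uo)
    {P : En n → ℝ} {g : ℝ → ℝ} {x : En n} {t : ℝ} {gx : En n} {g' : ℝ}
    (hP : ContDiff ℝ 1 P) (hg : ContDiff ℝ 1 g) (ht : 0 < t)
    (hgx : HasGradientAt P gx x) (hg' : HasDerivAt g g' t)
    (hm : IsLocalMax (fun q : En n × ℝ => u q - (P q.1 + g q.2)) (x, t)) :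
    g' + H x gx + u (x, t) - uo (x, t) ≤ 0 := by
  have h := hs (fun q => P q.1 + g q.2)
    ((hP.comp contDiff_fst).add (hg.comp contDiff_snd)) x t ht hm
  obtain ⟨h1, h2⟩ := test_derivs hgx hg'
  rwa [h1, h2] at h

lemma super_test {n : ℕ} {H : En n → En n → ℝ} {u uo : En n × ℝ → ℝ} (hs : EvolSuperIneq H u uo)
    {P : En n → ℝ} {g : ℝ → ℝ} {x : En n} {t : ℝ} {gx : En n} {g' : ℝ}
    (hP : ContDiff ℝ 1 P) (hg : ContDiff ℝ 1 g) (ht : 0 < t)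
    (hgx : HasGradientAt P gx x) (hg' : HasDerivAt g g' t)
    (hm : IsLocalMin (fun q : En n × ℝ => u q - (P q.1 + g q.2)) (x, t)) :
    0 ≤ g' + H x gx + u (x, t) - uo (x, t) := by
  have h := hs (fun q => P q.1 + g q.2)
    ((hP.comp contDiff_fst).add (hg.comp contDiff_snd)) x t ht hm
  obtain ⟨h1, h2⟩ := test_derivs hgx hg'
  rwa [h1, h2] at h

/-- time extension to negative times -/
def extU {n : ℕ} (u : En n × ℝ → ℝ) : En n × ℝ → ℝ := fun q => u (q.1, max q.2 0)

lemma extU_eq {n : ℕ} (u : En n × ℝ → ℝ) (x : En n) {t : ℝ} (ht : 0 ≤ t) :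
    extU u (x, t) = u (x, t) := by simp [extU, ht]

lemma extU_cont {n : ℕ} {u : En n × ℝ → ℝ} (h : ContinuousOn u {q : En n × ℝ | 0 ≤ q.2}) :
    Continuous (extU u) := by
  have h1 : Continuous (fun q : En n × ℝ => (q.1, max q.2 0)) := by fun_prop
  exact h.comp_continuous h1 (fun q => by simp)

lemma extU_per {n : ℕ} {u : En n × ℝ → ℝ} (h : ZPeriodicST u) : ZPeriodicST (extU u) :=
  fun x k t => h x k _

lemma extU_ev {n : ℕ} (u φ : En n × ℝ → ℝ) (x : En n) {t : ℝ} (ht : 0 < t) :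
    (fun q => extU u q - φ q) =ᶠ[𝓝 (x, t)] (fun q => u q - φ q) := by
  have : ∀ᶠ q : En n × ℝ in 𝓝 (x, t), 0 < q.2 :=
    continuous_snd.continuousAt.eventually (lt_mem_nhds ht)
  filter_upwards [this] with q hq
  have := extU_eq u q.1 hq.le
  simp only [Prod.mk.eta] at this
  rw [this]

lemma extU_sub {n : ℕ} {H : En n → En n → ℝ} {u uo : En n × ℝ → ℝ} (h : EvolSubIneq H u uo) :
    EvolSubIneq H (extU u) (extU uo) := by
  intro φ hφ x t ht hm
  rw [extU_eq u x ht.le, extU_eq uo x ht.le]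
  exact h φ hφ x t ht ((extU_ev u φ x ht).isLocalMax_iff.1 hm)

lemma extU_super {n : ℕ} {H : En n → En n → ℝ} {u uo : En n × ℝ → ℝ} (h : EvolSuperIneq H u uo) :
    EvolSuperIneq H (extU u) (extU uo) := by
  intro φ hφ x t ht hm
  rw [extU_eq u x ht.le, extU_eq uo x ht.le]
  exact h φ hφ x t ht ((extU_ev u φ x ht).isLocalMin_iff.1 hm)

lemma reduce_per (n : ℕ) : ∃ R : ℝ, ∀ x : En n, ∃ k : Fin n → ℤ, ‖x + intVec n k‖ ≤ R := by
  refine ⟨Real.sqrt n, fun x => ⟨fun i => -⌊x i⌋, ?_⟩⟩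
  rw [EuclideanSpace.norm_eq]
  apply Real.sqrt_le_sqrt
  have : ∀ i : Fin n, ‖(x + intVec n (fun i => -⌊x i⌋)) i‖ ^ 2 ≤ 1 := by
    intro i
    have h1 : (x + intVec n (fun i => -⌊x i⌋)) i = Int.fract (x i) := by
      simp [intVec, Int.fract, sub_eq_add_neg]
    rw [h1, Real.norm_eq_abs, sq_abs]
    have := Int.fract_nonneg (x i)
    have := Int.fract_lt_one (x i)
    nlinarith
  calc _ ≤ ∑ i : Fin n, (1 : ℝ) := Finset.sum_le_sum (fun i _ => this i)
    _ = n := by simp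

lemma per_bdd {n : ℕ} {v : En n → ℝ} (hv : Continuous v) (hp : ZPeriodic v) :
    ∃ B : ℝ, 0 ≤ B ∧ ∀ x, |v x| ≤ B := by
  obtain ⟨R, hR⟩ := reduce_per n
  obtain ⟨B, hB⟩ := (isCompact_closedBall (0 : En n) R).exists_bound_of_continuousOn hv.continuousOn
  have hB' : ∀ x, |v x| ≤ B := by
    intro x
    obtain ⟨k, hk⟩ := hR x
    rw [← hp x k]
    exact hB _ (by simpa using hk)
  exact ⟨B, (abs_nonneg _).trans (hB' 0), hB'⟩

lemma exists_min_red {X : Type*} [TopologicalSpace X] {D K : Set X} {f : X → ℝ}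
    (hK : IsCompact K) (hD : IsClosed D) (hf : Continuous f) (p₀ : X) (hp₀ : p₀ ∈ D)
    (hred : ∀ p ∈ D, f p ≤ f p₀ → ∃ p' ∈ D, p' ∈ K ∧ f p' = f p) :
    ∃ p ∈ D, p ∈ K ∧ ∀ p' ∈ D, f p ≤ f p' := by
  obtain ⟨p₁, h1, h1', h1e⟩ := hred p₀ hp₀ le_rfl
  obtain ⟨p, hp, hm⟩ := (hK.inter_right hD).exists_isMinOn ⟨p₁, h1', h1⟩ hf.continuousOn
  refine ⟨p, hp.2, hp.1, fun p' hp' => ?_⟩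
  by_cases hle : f p' ≤ f p₀
  · obtain ⟨p₂, h2, h2', h2e⟩ := hred p' hp' hle
    rw [← h2e]; exact hm ⟨h2', h2⟩
  · have : f p ≤ f p₁ := hm ⟨h1', h1⟩
    linarith

lemma lim_le {X : Type*} [TopologicalSpace X] {F : X → ℝ} (hF : Continuous F) {p : ℕ → X} {l : X}
    {c : ℝ} (hp : Tendsto p atTop (𝓝 l)) (h : ∀ᶠ k in atTop, F (p k) ≤ c) : F l ≤ c :=
  le_of_tendsto ((hF.tendsto l).comp hp) h

lemma mono_time {n : ℕ} {H : En n → En n → ℝ} {u uo : En n × ℝ → ℝ} {B E : ℝ}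
    (hu : Continuous u) (hB : ∀ q, |u q| ≤ B) (hs : EvolSubIneq H u uo)
    (hH : ∀ x p, 0 ≤ H x p) (hE : 0 ≤ E)
    (hd : ∀ x t, 0 ≤ t → uo (x, t) - u (x, t) ≤ E * Real.exp (-2 * t))
    (x₀ : En n) {s t : ℝ} (hs0 : 0 ≤ s) (hst : s ≤ t) :
    u (x₀, t) ≤ u (x₀, s) + E / 2 * Real.exp (-2 * s) := by
  apply le_of_forall_pos_le_add
  intro e he
  have hB0 : 0 ≤ B := (abs_nonneg _).trans (hB (x₀, 0))
  set ε := e / 2 / (1 + t - s) with hε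
  have hpos : 0 < 1 + t - s := by linarith
  have hε0 : 0 < ε := by positivity
  have hεe : ε * (t - s) ≤ e / 2 := by
    have : ε * (1 + t - s) = e / 2 := by rw [hε]; field_simp
    nlinarith
  have hc : Continuous (fun x : En n => u (x, s)) := by fun_prop
  obtain ⟨r, hr, hr'⟩ := Metric.continuousAt_iff.1 (hc.continuousAt (x := x₀)) (e / 2) (by positivity)
  set M := 2 * B + E / 2 + ε * t with hM
  have ht0 : 0 ≤ t := hs0.trans hst
  have hM0 : 0 ≤ M := by positivity
  set m : ℝ := 1 + M / r ^ 2 with hm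
  have hm1 : 1 ≤ m := by have : 0 ≤ M / r ^ 2 := by positivity
                         linarith
  have hmr : M < m * r ^ 2 := by
    have : m * r ^ 2 = r ^ 2 + M := by rw [hm]; field_simp
    rw [this]; have : 0 < r ^ 2 := by positivity
    linarith
  set f : En n × ℝ → ℝ := fun q =>
    -u q - E / 2 * Real.exp (-2 * q.2) + ε * q.2 + m * ‖q.1 - x₀‖ ^ 2 with hf
  have hfc : Continuous f := by rw [hf]; fun_prop
  have hbd : ∀ q : En n × ℝ, s ≤ q.2 → f q ≤ f (x₀, t) →
      ε * q.2 + m * ‖q.1 - x₀‖ ^ 2 ≤ M := by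
    intro q hq h
    simp only [hf, sub_self, norm_zero] at h
    have h1 := abs_le.1 (hB q)
    have h2 := abs_le.1 (hB (x₀, t))
    have h3 : Real.exp (-2 * q.2) ≤ 1 := Real.exp_le_one_iff.2 (by linarith)
    have h4 : 0 < Real.exp (-2 * t) := Real.exp_pos _
    rw [hM]
    nlinarith
  obtain ⟨q, hqD, -, hqm⟩ := exists_min_red (D := {q : En n × ℝ | s ≤ q.2})
    (K := Metric.closedBall x₀ (M + 1) ×ˢ Icc s (M / ε)) (f := f)
    ((isCompact_closedBall _ _).prod isCompact_Icc)
    (isClosed_le continuous_const continuous_snd) hfc (x₀, t) hst (by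
      intro p hp hle
      refine ⟨p, hp, ⟨?_, hp, ?_⟩, rfl⟩
      · have := hbd p hp hle
        rw [Metric.mem_closedBall, dist_eq_norm]
        have h1 : 0 ≤ ε * p.2 := mul_nonneg hε0.le (hs0.trans hp)
        by_contra hcon
        push Not at hcon
        nlinarith [norm_nonneg (p.1 - x₀)]
      · have := hbd p hp hle
        rw [le_div_iff₀ hε0]
        have : 0 ≤ m * ‖p.1 - x₀‖ ^ 2 := by positivity
        linarith)
  have hq0 := hqm (x₀, t) hst
  have hqb := hbd q hqD hq0
  obtain ⟨y, τ⟩ := q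
  have hτ : s ≤ τ := hqD
  rcases hτ.lt_or_eq with hlt | heq
  · exfalso
    have hτ0 : 0 < τ := hs0.trans_lt hlt
    have hd1 : HasDerivAt (fun t' : ℝ => -(E / 2) * Real.exp (-2 * t') + ε * t')
        (E * Real.exp (-2 * τ) + ε) τ := by
      have h1 : HasDerivAt (fun t' : ℝ => -2 * t') (-2) τ := by
        simpa using (hasDerivAt_id τ).const_mul (-2)
      have h2 := (h1.exp.const_mul (-(E / 2))).add ((hasDerivAt_id τ).const_mul ε)
      exact h2.congr_deriv (by ring)
    have := sub_test hs (cd_sq m x₀) (g := fun t' : ℝ => -(E / 2) * Real.exp (-2 * t') + ε * t')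
      (by fun_prop) hτ0 (grad_sq m x₀ y) hd1 (by
        have hev : ∀ᶠ q : En n × ℝ in 𝓝 (y, τ), s < q.2 :=
          continuous_snd.continuousAt.eventually (lt_mem_nhds hlt)
        filter_upwards [hev] with q hq
        have := hqm q hq.le
        simp only [hf] at this
        linarith)
    have h1 := hH y ((2 * m) • (y - x₀))
    have h2 := hd y τ hτ0.le
    linarith
  · subst heq
    have hy : dist y x₀ < r := by
      rw [dist_eq_norm]
      by_contra hcon
      push Not at hcon
      have h1 : r ^ 2 ≤ ‖y - x₀‖ ^ 2 := by gcongr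
      have h2 : 0 ≤ ε * s := mul_nonneg hε0.le hs0
      simp only at hqb
      nlinarith
    have h1 := hr' hy
    rw [Real.dist_eq] at h1
    have h1 := (abs_lt.1 h1).2
    simp only [hf, sub_self, norm_zero] at hq0
    have h4 : 0 < Real.exp (-2 * t) := Real.exp_pos _
    have h5 : 0 ≤ m * ‖y - x₀‖ ^ 2 := by positivity
    nlinarith

lemma sq_small {a M m : ℝ} (ha : 0 ≤ a) (hm : 1 ≤ m) (h : m * a ^ 2 ≤ M) : a ≤ M + 1 := by
  by_contra hcon
  push Not at hcon
  have h1 : a ^ 2 ≤ m * a ^ 2 := by nlinarith [sq_nonneg a]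
  nlinarith [sq_nonneg (a - 1)]

lemma lim_sq_zero {X : Type*} [TopologicalSpace X] {F : X → ℝ} (hF : Continuous F) {p : ℕ → X}
    {l : X} {M : ℝ} {φ : ℕ → ℕ} (hφ : StrictMono φ) (hp : Tendsto (p ∘ φ) atTop (𝓝 l))
    (h : ∀ k : ℕ, ((k : ℝ) + 1) * F (p k) ^ 2 ≤ M) : F l = 0 := by
  have h1 : Tendsto (fun k => F (p (φ k)) ^ 2) atTop (𝓝 (F l ^ 2)) :=
    (((hF.pow 2).tendsto l).comp hp)
  have h2 : Tendsto (fun k : ℕ => M / ((k : ℝ) + 1)) atTop (𝓝 0) :=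
    tendsto_const_nhds.div_atTop (tendsto_atTop_add_const_right _ _ tendsto_natCast_atTop_atTop)
  have h3 : F l ^ 2 ≤ 0 := by
    refine le_of_tendsto_of_tendsto' h1 (h2.comp hφ.tendsto_atTop) (fun k => ?_)
    simp only [Function.comp]
    rw [le_div_iff₀ (by positivity), mul_comm]
    exact h _
  exact pow_eq_zero_iff (two_ne_zero) |>.1 (le_antisymm h3 (sq_nonneg _))

lemma decay_aux {n : ℕ} {H : En n → En n → ℝ} {u₁ u₂ : En n × ℝ → ℝ} {B E ε lam c R : ℝ}
    (hHc : Continuous fun q : En n × En n => H q.1 q.2) (hco : Coercive H)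
    (hu₁ : Continuous u₁) (hu₂ : Continuous u₂) (hp₁ : ZPeriodicST u₁) (hp₂ : ZPeriodicST u₂)
    (hB₁ : ∀ q, |u₁ q| ≤ B) (hB₂ : ∀ q, |u₂ q| ≤ B)
    (hsub : EvolSubIneq H u₁ u₂) (hsup : EvolSuperIneq H u₂ u₁)
    (hR : ∀ x : En n, ∃ k : Fin n → ℤ, ‖x + intVec n k‖ ≤ R)
    (hE : 0 ≤ E) (hε : 0 < ε) (hl : 1 ≤ lam) (hc : 0 < c)
    (x₁ : En n) {t₁ : ℝ} (ht₁ : 0 ≤ t₁)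
    (hneg : u₂ (x₁, t₁) - u₁ (x₁, t₁) + E * Real.exp (-2 * t₁) + ε * t₁ ≤ -c) :
    ∃ (x : En n) (t s : ℝ), ‖x‖ ≤ R ∧ 0 ≤ t ∧ 0 ≤ s ∧
      u₂ (x, s) - u₁ (x, t) + E * Real.exp (-2 * t) + ε * t + lam * |t - s| ^ 2 ≤ -c ∧
      (0 < t → 0 < s → -2 * E * Real.exp (-2 * t) + ε + (u₁ (x, t) - u₂ (x, t))
        + (u₁ (x, s) - u₂ (x, s)) ≤ 0) := by
  have hB0 : 0 ≤ B := (abs_nonneg _).trans (hB₁ (x₁, 0))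
  set f : ℕ → En n × En n × ℝ × ℝ → ℝ := fun m p =>
    u₂ (p.2.1, p.2.2.2) - u₁ (p.1, p.2.2.1) + E * Real.exp (-2 * p.2.2.1) + ε * p.2.2.1
      + lam * |p.2.2.1 - p.2.2.2| ^ 2 + ((m : ℝ) + 1) * ‖p.1 - p.2.1‖ ^ 2 with hf
  have hfc : ∀ m, Continuous (f m) := by intro m; rw [hf]; fun_prop
  set D : Set (En n × En n × ℝ × ℝ) := {p | 0 ≤ p.2.2.1 ∧ 0 ≤ p.2.2.2} with hD
  have hDc : IsClosed D := by
    have h1 : Continuous fun p : En n × En n × ℝ × ℝ => p.2.2.1 := by fun_prop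
    have h2 : Continuous fun p : En n × En n × ℝ × ℝ => p.2.2.2 := by fun_prop
    exact (isClosed_le continuous_const h1).inter (isClosed_le continuous_const h2)
  set p₀ : En n × En n × ℝ × ℝ := (x₁, x₁, t₁, t₁) with hp₀
  have hp₀D : p₀ ∈ D := ⟨ht₁, ht₁⟩
  have hfp₀ : ∀ m, f m p₀ ≤ -c := by
    intro m; simp only [hf, hp₀, sub_self, norm_zero, abs_zero]; linarith
  have hbd : ∀ m p, p ∈ D → f m p ≤ -c → ε * p.2.2.1 + lam * |p.2.2.1 - p.2.2.2| ^ 2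
      + ((m : ℝ) + 1) * ‖p.1 - p.2.1‖ ^ 2 ≤ 2 * B := by
    intro m p hp h
    simp only [hf] at h
    have h1 := abs_le.1 (hB₁ (p.1, p.2.2.1))
    have h2 := abs_le.1 (hB₂ (p.2.1, p.2.2.2))
    have h3 : 0 ≤ E * Real.exp (-2 * p.2.2.1) := mul_nonneg hE (Real.exp_pos _).le
    linarith
  set K : Set (En n × En n × ℝ × ℝ) := Metric.closedBall 0 R ×ˢ Metric.closedBall 0 (R + (2 * B + 1))
    ×ˢ Icc 0 (2 * B / ε) ×ˢ Icc 0 (2 * B / ε + (2 * B + 1)) with hK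
  have hKc : IsCompact K := (isCompact_closedBall _ _).prod
    ((isCompact_closedBall _ _).prod (isCompact_Icc.prod isCompact_Icc))
  have hbd' : ∀ m p, p ∈ D → f m p ≤ -c → ‖p.1 - p.2.1‖ ≤ 2 * B + 1 ∧ p.2.2.1 ≤ 2 * B / ε ∧
      |p.2.2.1 - p.2.2.2| ≤ 2 * B + 1 ∧ ((m : ℝ) + 1) * ‖p.1 - p.2.1‖ ^ 2 ≤ 2 * B := by
    intro m p hp h
    have h0 := hbd m p hp h
    have h1 : 0 ≤ ε * p.2.2.1 := mul_nonneg hε.le hp.1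
    have h2 : 0 ≤ lam * |p.2.2.1 - p.2.2.2| ^ 2 := by positivity
    have h3 : 0 ≤ ((m : ℝ) + 1) * ‖p.1 - p.2.1‖ ^ 2 := by positivity
    have hm : (0 : ℝ) ≤ m := Nat.cast_nonneg m
    refine ⟨sq_small (norm_nonneg _) (m := (m : ℝ) + 1) (by linarith) (by linarith), ?_,
      sq_small (abs_nonneg _) hl (by linarith), by linarith⟩
    rw [le_div_iff₀ hε]; linarith
  have hex : ∀ m, ∃ p ∈ D, p ∈ K ∧ ∀ p' ∈ D, f m p ≤ f m p' := by
    intro m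
    refine exists_min_red hKc hDc (hfc m) p₀ hp₀D ?_
    intro p hp hle
    obtain ⟨h1, h2, h3, -⟩ := hbd' m p hp (hle.trans (hfp₀ m))
    obtain ⟨k, hk⟩ := hR p.1
    refine ⟨(p.1 + intVec n k, p.2.1 + intVec n k, p.2.2.1, p.2.2.2), hp, ⟨?_, ?_, ⟨hp.1, h2⟩,
      ⟨hp.2, ?_⟩⟩, ?_⟩
    · simpa using hk
    · simp only [mem_closedBall_zero_iff]
      have : p.2.1 + intVec n k = (p.1 + intVec n k) - (p.1 - p.2.1) := by abel
      rw [this]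
      exact (norm_sub_le _ _).trans (add_le_add hk h1)
    · have := (abs_le.1 h3).1
      simp only; linarith
    · simp only [hf, hp₁ _ _ _, hp₂ _ _ _, add_sub_add_right_eq_sub]
  choose p hpD hpK hpm using hex
  have hpc : ∀ m, f m (p m) ≤ -c := fun m => (hpm m p₀ hp₀D).trans (hfp₀ m)
  obtain ⟨l, hlK, φ, hφ, hlim⟩ := hKc.tendsto_subseq hpK
  have hlD : l ∈ D := hDc.mem_of_tendsto hlim (Eventually.of_forall fun k => hpD _)
  have hxy : ‖l.1 - l.2.1‖ = 0 := lim_sq_zero (F := fun p : En n × En n × ℝ × ℝ => ‖p.1 - p.2.1‖)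
    (by fun_prop) hφ hlim (fun k => (hbd' k (p k) (hpD k) (hpc k)).2.2.2)
  obtain ⟨x, y, t, s⟩ := l
  have hxy : x = y := by simpa [sub_eq_zero] using hxy
  subst hxy
  refine ⟨x, t, s, by simpa using hlK.1, hlD.1, hlD.2, ?_, ?_⟩
  · refine lim_le (F := fun p : En n × En n × ℝ × ℝ => u₂ (p.2.1, p.2.2.2) - u₁ (p.1, p.2.2.1)
      + E * Real.exp (-2 * p.2.2.1) + ε * p.2.2.1 + lam * |p.2.2.1 - p.2.2.2| ^ 2)
      (by fun_prop) hlim (Eventually.of_forall fun k => ?_)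
    have := hpc (φ k)
    simp only [hf] at this
    have h3 : 0 ≤ ((φ k : ℝ) + 1) * ‖(p (φ k)).1 - (p (φ k)).2.1‖ ^ 2 := by positivity
    simp only [Function.comp]
    linarith
  · intro ht hs
    -- the PDE inequalities
    set a : ℕ → En n := fun m => (2 * ((m : ℝ) + 1)) • ((p m).1 - (p m).2.1) with ha
    have hpde : ∀ m, 0 < (p m).2.2.1 → 0 < (p m).2.2.2 →
        -2 * E * Real.exp (-2 * (p m).2.2.1) + ε + 2 * lam * ((p m).2.2.1 - (p m).2.2.2)
          + H (p m).1 (a m) + u₁ ((p m).1, (p m).2.2.1) - u₂ ((p m).1, (p m).2.2.1) ≤ 0 ∧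
        0 ≤ 2 * lam * ((p m).2.2.1 - (p m).2.2.2)
          + H (p m).2.1 (a m) + u₂ ((p m).2.1, (p m).2.2.2) - u₁ ((p m).2.1, (p m).2.2.2) := by
      intro m htm hsm
      have hmin := hpm m
      simp only [ha]
      generalize p m = q at htm hsm hmin
      obtain ⟨X, Y, T, S⟩ := q
      simp only at htm hsm hmin ⊢
      constructor
      · have hd1 : HasDerivAt (fun t' : ℝ => E * Real.exp (-2 * t') + ε * t' + lam * (t' - S) ^ 2)
            (-2 * E * Real.exp (-2 * T) + ε + 2 * lam * (T - S)) T := by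
          have h1 : HasDerivAt (fun t' : ℝ => -2 * t') (-2) T := by
            simpa using (hasDerivAt_id T).const_mul (-2)
          have h2 := ((h1.exp.const_mul E).add ((hasDerivAt_id T).const_mul ε)).add
            ((((hasDerivAt_id T).sub_const S).pow 2).const_mul lam)
          exact h2.congr_deriv (by simp; ring)
        refine sub_test hsub (cd_sq ((m : ℝ) + 1) Y)
          (g := fun t' : ℝ => E * Real.exp (-2 * t') + ε * t' + lam * (t' - S) ^ 2)
          (by fun_prop) htm (grad_sq _ Y X) hd1 ?_
        have hev : ∀ᶠ q : En n × ℝ in 𝓝 (X, T), 0 < q.2 :=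
          continuous_snd.continuousAt.eventually (lt_mem_nhds htm)
        filter_upwards [hev] with q hq
        have := hmin (q.1, Y, q.2, S) ⟨hq.le, hsm.le⟩
        simp only [hf, sq_abs] at this
        linarith
      · have hd1 : HasDerivAt (fun s' : ℝ => -lam * (T - s') ^ 2)
            (2 * lam * (T - S)) S := by
          have h2 := (((hasDerivAt_id S).const_sub T).pow 2).const_mul (-lam)
          exact h2.congr_deriv (by simp; ring)
        have hg : (2 * ((m : ℝ) + 1)) • (X - Y) = (2 * (-((m : ℝ) + 1))) • (Y - X) := by
          rw [← neg_sub Y X, smul_neg, ← neg_smul]; congr 1; ring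
        rw [hg]
        refine super_test hsup (cd_sq (-((m : ℝ) + 1)) X)
          (g := fun s' : ℝ => -lam * (T - s') ^ 2)
          (by fun_prop) hsm (grad_sq _ X Y) hd1 ?_
        have hev : ∀ᶠ q : En n × ℝ in 𝓝 (Y, S), 0 < q.2 :=
          continuous_snd.continuousAt.eventually (lt_mem_nhds hsm)
        filter_upwards [hev] with q hq
        have := hmin (X, q.1, T, q.2) ⟨htm.le, hq.le⟩
        simp only [hf, sq_abs] at this
        rw [norm_sub_rev Y X, norm_sub_rev q.1 X]
        linarith
    have hev1 : ∀ᶠ k in atTop, 0 < (p (φ k)).2.2.1 := by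
      have : Continuous fun p : En n × En n × ℝ × ℝ => p.2.2.1 := by fun_prop
      exact ((this.tendsto _).comp hlim).eventually (lt_mem_nhds ht)
    have hev2 : ∀ᶠ k in atTop, 0 < (p (φ k)).2.2.2 := by
      have : Continuous fun p : En n × En n × ℝ × ℝ => p.2.2.2 := by fun_prop
      exact ((this.tendsto _).comp hlim).eventually (lt_mem_nhds hs)
    obtain ⟨r, hr⟩ := hco (2 * E + 2 * lam * (2 * B + 1) + 2 * B + 1)
    have hab : ∀ᶠ k in atTop, a (φ k) ∈ Metric.closedBall (0 : En n) r := by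
      filter_upwards [hev1, hev2] with k h1 h2
      have h3 := (hpde _ h1 h2).1
      rw [mem_closedBall_zero_iff]
      by_contra hcon
      push Not at hcon
      have h4 := hr (p (φ k)).1 (a (φ k)) hcon.le
      have h5 := (abs_le.1 (hbd' _ _ (hpD (φ k)) (hpc (φ k))).2.2.1).1
      have h6 := (abs_le.1 (hB₁ ((p (φ k)).1, (p (φ k)).2.2.1))).1
      have h7 := (abs_le.1 (hB₂ ((p (φ k)).1, (p (φ k)).2.2.1))).2
      have h8 : Real.exp (-2 * (p (φ k)).2.2.1) ≤ 1 := Real.exp_le_one_iff.2 (by linarith)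
      nlinarith
    obtain ⟨A, -, φ', hφ', hA⟩ := (isCompact_closedBall (0 : En n) r).tendsto_subseq'
      (x := fun k => a (φ k)) hab.frequently
    have hlim2 : Tendsto (fun k => (p (φ (φ' k)), a (φ (φ' k)))) atTop (𝓝 ((x, x, t, s), A)) :=
      (hlim.comp hφ'.tendsto_atTop).prodMk_nhds hA
    have hfin := lim_le (c := 0) (F := fun q : (En n × En n × ℝ × ℝ) × En n =>
      -2 * E * Real.exp (-2 * q.1.2.2.1) + ε + (H q.1.1 q.2 - H q.1.2.1 q.2)
        + (u₁ (q.1.1, q.1.2.2.1) - u₂ (q.1.1, q.1.2.2.1))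
        + (u₁ (q.1.2.1, q.1.2.2.2) - u₂ (q.1.2.1, q.1.2.2.2))) (by
          have h1 : Continuous fun q : (En n × En n × ℝ × ℝ) × En n => H q.1.1 q.2 :=
            hHc.comp (f := fun q : (En n × En n × ℝ × ℝ) × En n => (q.1.1, q.2)) (by fun_prop)
          have h2 : Continuous fun q : (En n × En n × ℝ × ℝ) × En n => H q.1.2.1 q.2 :=
            hHc.comp (f := fun q : (En n × En n × ℝ × ℝ) × En n => (q.1.2.1, q.2)) (by fun_prop)
          fun_prop) hlim2 (by
        filter_upwards [hφ'.tendsto_atTop.eventually hev1, hφ'.tendsto_atTop.eventually hev2]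
          with k h1 h2
        obtain ⟨h3, h4⟩ := hpde _ h1 h2
        linarith)
    simp only at hfin
    linarith

lemma decay {n : ℕ} {H : En n → En n → ℝ} {u₁ u₂ : En n × ℝ → ℝ} {B E : ℝ}
    (hHc : Continuous fun q : En n × En n => H q.1 q.2) (hco : Coercive H)
    (hu₁ : Continuous u₁) (hu₂ : Continuous u₂) (hp₁ : ZPeriodicST u₁) (hp₂ : ZPeriodicST u₂)
    (hB₁ : ∀ q, |u₁ q| ≤ B) (hB₂ : ∀ q, |u₂ q| ≤ B)
    (hsub : EvolSubIneq H u₁ u₂) (hsup : EvolSuperIneq H u₂ u₁)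
    (hE : 0 ≤ E) (h0 : ∀ x, u₁ (x, 0) - u₂ (x, 0) ≤ E)
    (x₁ : En n) {t₁ : ℝ} (ht₁ : 0 ≤ t₁) :
    u₁ (x₁, t₁) - u₂ (x₁, t₁) ≤ E * Real.exp (-2 * t₁) := by
  by_contra hcon
  push Not at hcon
  obtain ⟨R, hR⟩ := reduce_per n
  set d := u₁ (x₁, t₁) - u₂ (x₁, t₁) - E * Real.exp (-2 * t₁) with hd
  have hd0 : 0 < d := by linarith
  set ε := d / 2 / (1 + t₁) with hεd
  have hε : 0 < ε := by positivity
  have hεt : ε * t₁ ≤ d / 2 := by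
    have : ε * (1 + t₁) = d / 2 := by rw [hεd]; field_simp
    nlinarith
  have hB0 : 0 ≤ B := (abs_nonneg _).trans (hB₁ (x₁, 0))
  have := fun m : ℕ => decay_aux (lam := (m : ℝ) + 1) (c := d / 2) hHc hco hu₁ hu₂ hp₁ hp₂ hB₁ hB₂
    hsub hsup hR hE hε (by have : (0 : ℝ) ≤ m := Nat.cast_nonneg m
                           linarith) (by positivity) x₁ ht₁ (by linarith)
  choose x t s hx ht hs hv hpde using this
  have hbd : ∀ m : ℕ, ε * t m + ((m : ℝ) + 1) * |t m - s m| ^ 2 ≤ 2 * B := by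
    intro m
    have h1 := abs_le.1 (hB₁ (x m, t m))
    have h2 := abs_le.1 (hB₂ (x m, s m))
    have h3 : 0 ≤ E * Real.exp (-2 * t m) := mul_nonneg hE (Real.exp_pos _).le
    have := hv m
    linarith
  have hK : IsCompact (Metric.closedBall (0 : En n) R ×ˢ Icc (0 : ℝ) (2 * B / ε) ×ˢ
    Icc (0 : ℝ) (2 * B / ε + (2 * B + 1))) :=
    (isCompact_closedBall _ _).prod (isCompact_Icc.prod isCompact_Icc)
  have hin : ∀ m, (x m, t m, s m) ∈ Metric.closedBall (0 : En n) R ×ˢ Icc (0 : ℝ) (2 * B / ε) ×ˢ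
      Icc (0 : ℝ) (2 * B / ε + (2 * B + 1)) := by
    intro m
    have h0 := hbd m
    have h1 : 0 ≤ ε * t m := mul_nonneg hε.le (ht m)
    have h2 : 0 ≤ ((m : ℝ) + 1) * |t m - s m| ^ 2 := by positivity
    have h3 : |t m - s m| ≤ 2 * B + 1 := sq_small (abs_nonneg _) (m := (m : ℝ) + 1)
      (by have : (0 : ℝ) ≤ m := Nat.cast_nonneg m
          linarith) (by linarith)
    have h4 : t m ≤ 2 * B / ε := by rw [le_div_iff₀ hε]; linarith
    refine ⟨by simpa using hx m, ⟨ht m, h4⟩, ⟨hs m, ?_⟩⟩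
    have := (abs_le.1 h3).1
    simp only; linarith
  obtain ⟨⟨X, T, S⟩, hlK, φ, hφ, hlim⟩ := hK.tendsto_subseq hin
  have hTS := lim_sq_zero (F := fun q : En n × ℝ × ℝ => |q.2.1 - q.2.2|) (by fun_prop) hφ hlim
    (M := 2 * B) (fun k => by
      have h1 : 0 ≤ ε * t k := mul_nonneg hε.le (ht k)
      have := hbd k
      simp only; linarith)
  have hTS : T = S := by simpa [sub_eq_zero] using hTS
  subst hTS
  have hval := lim_le (c := -(d / 2)) (F := fun q : En n × ℝ × ℝ => u₂ (q.1, q.2.2) - u₁ (q.1, q.2.1)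
      + E * Real.exp (-2 * q.2.1) + ε * q.2.1) (by fun_prop) hlim (Eventually.of_forall fun k => by
      have h1 : 0 ≤ (((φ k : ℕ) : ℝ) + 1) * |t (φ k) - s (φ k)| ^ 2 := by positivity
      have := hv (φ k)
      simp only [Function.comp]; linarith)
  simp only at hval
  have hT0 : 0 ≤ T := hlK.2.1.1
  have hT : 0 < T := by
    rcases hT0.lt_or_eq with h | h
    · exact h
    · subst h
      have := h0 X
      simp at hval
      linarith
  have hev1 : ∀ᶠ k in atTop, 0 < t (φ k) := by
    have : Continuous fun p : En n × ℝ × ℝ => p.2.1 := by fun_prop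
    exact ((this.tendsto _).comp hlim).eventually (lt_mem_nhds hT)
  have hev2 : ∀ᶠ k in atTop, 0 < s (φ k) := by
    have : Continuous fun p : En n × ℝ × ℝ => p.2.2 := by fun_prop
    exact ((this.tendsto _).comp hlim).eventually (lt_mem_nhds hT)
  have hfin := lim_le (c := 0) (F := fun q : En n × ℝ × ℝ => -2 * E * Real.exp (-2 * q.2.1) + ε
    + (u₁ (q.1, q.2.1) - u₂ (q.1, q.2.1)) + (u₁ (q.1, q.2.2) - u₂ (q.1, q.2.2))) (by fun_prop) hlim
    (by filter_upwards [hev1, hev2] with k h1 h2 using hpde _ h1 h2)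
  simp only at hfin
  have : 0 ≤ ε * T := mul_nonneg hε.le hT0
  linarith

set_option maxHeartbeats 2000000 in
lemma key_plus {n : ℕ} {H : En n → En n → ℝ} {v : En n → ℝ} {u uo : En n × ℝ → ℝ}
    {B C E η ψ κ s₀ Gm : ℝ} {G : ℝ → ℝ}
    (hHc : Continuous fun q : En n × En n => H q.1 q.2) (hco : Coercive H)
    (hv : Continuous v) (hvp : ZPeriodic v) (hvs : SingleSub H v 0)
    (hu : Continuous u) (huo : Continuous uo) (hup : ZPeriodicST u)
    (hBv : ∀ x, |v x| ≤ B) (hBu : ∀ q, |u q| ≤ B) (hBuo : ∀ q, |uo q| ≤ B)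
    (hnorm : ∀ x t, 1 ≤ u (x, t) - v x ∧ u (x, t) - v x ≤ C)
    (hsub : EvolSubIneq H u uo) (hsup : EvolSuperIneq H u uo)
    (hdec : ∀ x t, 0 ≤ t → |u (x, t) - uo (x, t)| ≤ E * Real.exp (-2 * t))
    (hE : 0 ≤ E) (hη : 0 < η) (hA : A8plusAt H (η / 2) ψ) (hκ : 0 ≤ κ)
    (hs₀ : 0 ≤ s₀) (hEs : E * Real.exp (-2 * s₀) ≤ η / 2)
    (hG : ContDiff ℝ 1 G) (hGd : ∀ s, HasDerivAt G (-κ * (G s - 1)) s)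
    (hG1 : ∀ s, 1 < G s) (hGm : ∀ s, s₀ ≤ s → G s ≤ Gm) (hG0 : C ≤ G s₀)
    (hfin : ∀ s, s₀ ≤ s →
      κ * C * (G s - 1) + (G s + 1) * (E * Real.exp (-2 * s)) ≤ ψ * (G s - 1))
    (x₁ : En n) {s₁ t₁ : ℝ} (hs₁ : s₀ ≤ s₁) (ht₁ : s₁ ≤ t₁) :
    u (x₁, s₁) - v x₁ ≤ G s₁ * (u (x₁, t₁) - v x₁ + η * (t₁ - s₁)) := by
  by_contra hcon
  push Not at hcon
  obtain ⟨R, hR⟩ := reduce_per n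
  set d := u (x₁, s₁) - v x₁ - G s₁ * (u (x₁, t₁) - v x₁ + η * (t₁ - s₁)) with hd
  have hd0 : 0 < d := by linarith
  have hs₁0 : 0 ≤ s₁ := hs₀.trans hs₁
  obtain ⟨ε, hε, hεs⟩ : ∃ ε : ℝ, 0 < ε ∧ ε * s₁ ≤ d / 2 := by
    refine ⟨d / 2 / (1 + s₁), by positivity, ?_⟩
    have h1 : d / 2 / (1 + s₁) * (1 + s₁) = d / 2 := by field_simp
    have h2 : 0 ≤ d / 2 / (1 + s₁) := by positivity
    nlinarith
  obtain ⟨c, hc, hcd⟩ : ∃ c : ℝ, 0 < c ∧ c = d / 2 := ⟨d / 2, by positivity, rfl⟩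
  have hB0 : 0 ≤ B := (abs_nonneg _).trans (hBv x₁)
  have hGc : Continuous G := hG.continuous
  set f : ℕ → En n × En n × En n × ℝ × ℝ → ℝ := fun m p =>
    G p.2.2.2.2 * (u (p.1, p.2.2.2.1) - v p.2.2.1 + η * (p.2.2.2.1 - p.2.2.2.2))
      - (u (p.2.1, p.2.2.2.2) - v p.2.2.1) + ε * p.2.2.2.2
      + (((m : ℝ) + 1) * ‖p.1 - p.2.1‖ ^ 2 + ((m : ℝ) + 1) * ‖p.1 - p.2.2.1‖ ^ 2) with hf
  have hfc : ∀ m, Continuous (f m) := by intro m; rw [hf]; fun_prop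
  set D : Set (En n × En n × En n × ℝ × ℝ) :=
    {p | s₀ ≤ p.2.2.2.2 ∧ p.2.2.2.2 ≤ p.2.2.2.1} with hD
  have hDc : IsClosed D := by
    have h1 : Continuous fun p : En n × En n × En n × ℝ × ℝ => p.2.2.2.1 := by fun_prop
    have h2 : Continuous fun p : En n × En n × En n × ℝ × ℝ => p.2.2.2.2 := by fun_prop
    exact (isClosed_le continuous_const h2).inter (isClosed_le h2 h1)
  set p₀ : En n × En n × En n × ℝ × ℝ := (x₁, x₁, x₁, t₁, s₁) with hp₀
  have hp₀D : p₀ ∈ D := ⟨hs₁, ht₁⟩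
  have hfp₀ : ∀ m, f m p₀ ≤ -c := by
    intro m; simp only [hf, hp₀, sub_self, norm_zero]; linarith
  obtain ⟨M, hM⟩ : ∃ M : ℝ, M = 2 * B * Gm + 2 * B := ⟨_, rfl⟩
  have hbd : ∀ m p, p ∈ D → f m p ≤ -c → η * (p.2.2.2.1 - p.2.2.2.2) + ε * p.2.2.2.2
      + (((m : ℝ) + 1) * ‖p.1 - p.2.1‖ ^ 2 + ((m : ℝ) + 1) * ‖p.1 - p.2.2.1‖ ^ 2) ≤ M := by
    intro m p hp h
    simp only [hf] at h
    have h1 := abs_le.1 (hBu (p.1, p.2.2.2.1))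
    have h2 := abs_le.1 (hBu (p.2.1, p.2.2.2.2))
    have h3 := abs_le.1 (hBv p.2.2.1)
    have h4 := hG1 p.2.2.2.2
    have h5 := hGm p.2.2.2.2 hp.1
    have h6 : 0 ≤ η * (p.2.2.2.1 - p.2.2.2.2) := mul_nonneg hη.le (sub_nonneg.2 hp.2)
    have h7 : G p.2.2.2.2 * (u (p.1, p.2.2.2.1) - v p.2.2.1) ≥ -(2 * B * Gm) := by
      have : G p.2.2.2.2 * (u (p.1, p.2.2.2.1) - v p.2.2.1 + 2 * B) ≥ 0 :=
        mul_nonneg (by linarith) (by linarith)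
      nlinarith
    rw [hM]
    nlinarith
  set K : Set (En n × En n × En n × ℝ × ℝ) := Metric.closedBall 0 R
    ×ˢ Metric.closedBall 0 (R + (M + 1)) ×ˢ Metric.closedBall 0 (R + (M + 1))
    ×ˢ Icc 0 (M / ε + M / η) ×ˢ Icc 0 (M / ε) with hK
  have hKc : IsCompact K := (isCompact_closedBall _ _).prod
    ((isCompact_closedBall _ _).prod ((isCompact_closedBall _ _).prod
      (isCompact_Icc.prod isCompact_Icc)))
  have hbd' : ∀ m p, p ∈ D → f m p ≤ -c → ‖p.1 - p.2.1‖ ≤ M + 1 ∧ ‖p.1 - p.2.2.1‖ ≤ M + 1 ∧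
      p.2.2.2.2 ≤ M / ε ∧ η * (p.2.2.2.1 - p.2.2.2.2) ≤ M ∧
      ((m : ℝ) + 1) * ‖p.1 - p.2.1‖ ^ 2 ≤ M ∧ ((m : ℝ) + 1) * ‖p.1 - p.2.2.1‖ ^ 2 ≤ M := by
    intro m p hp h
    have h0 := hbd m p hp h
    have h1 : 0 ≤ ε * p.2.2.2.2 := mul_nonneg hε.le (hs₀.trans hp.1)
    have h2 : 0 ≤ η * (p.2.2.2.1 - p.2.2.2.2) := mul_nonneg hη.le (sub_nonneg.2 hp.2)
    have h3 : 0 ≤ ((m : ℝ) + 1) * ‖p.1 - p.2.1‖ ^ 2 := by positivity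
    have h4 : 0 ≤ ((m : ℝ) + 1) * ‖p.1 - p.2.2.1‖ ^ 2 := by positivity
    have hm : (0 : ℝ) ≤ m := Nat.cast_nonneg m
    refine ⟨sq_small (norm_nonneg _) (m := (m : ℝ) + 1) (by linarith) (by linarith),
      sq_small (norm_nonneg _) (m := (m : ℝ) + 1) (by linarith) (by linarith), ?_,
      by linarith, by linarith, by linarith⟩
    rw [le_div_iff₀ hε]; linarith
  have hex : ∀ m, ∃ p ∈ D, p ∈ K ∧ ∀ p' ∈ D, f m p ≤ f m p' := by
    intro m
    refine exists_min_red hKc hDc (hfc m) p₀ hp₀D ?_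
    intro p hp hle
    obtain ⟨h1, h2, h3, h4, -⟩ := hbd' m p hp (hle.trans (hfp₀ m))
    obtain ⟨k, hk⟩ := hR p.1
    have h5 : 0 ≤ p.2.2.2.2 := hs₀.trans hp.1
    have h6 : p.2.2.2.1 - p.2.2.2.2 ≤ M / η := by rw [le_div_iff₀ hη]; linarith
    refine ⟨(p.1 + intVec n k, p.2.1 + intVec n k, p.2.2.1 + intVec n k, p.2.2.2.1, p.2.2.2.2), hp,
      ⟨?_, ?_, ?_, ⟨h5.trans hp.2, ?_⟩, ⟨h5, h3⟩⟩, ?_⟩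
    · simpa using hk
    · simp only [mem_closedBall_zero_iff]
      have : p.2.1 + intVec n k = (p.1 + intVec n k) - (p.1 - p.2.1) := by abel
      rw [this]
      exact (norm_sub_le _ _).trans (add_le_add hk h1)
    · simp only [mem_closedBall_zero_iff]
      have : p.2.2.1 + intVec n k = (p.1 + intVec n k) - (p.1 - p.2.2.1) := by abel
      rw [this]
      exact (norm_sub_le _ _).trans (add_le_add hk h2)
    · simp only; linarith
    · simp only [hf, hup _ _ _, hvp _ _, add_sub_add_right_eq_sub]
  choose p hpD hpK hpm using hex
  have hpc : ∀ m, f m (p m) ≤ -c := fun m => (hpm m p₀ hp₀D).trans (hfp₀ m)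
  obtain ⟨l, hlK, φ, hφ, hlim⟩ := hKc.tendsto_subseq hpK
  have hlD : l ∈ D := hDc.mem_of_tendsto hlim (Eventually.of_forall fun k => hpD _)
  have hxy : ‖l.1 - l.2.1‖ = 0 := lim_sq_zero
    (F := fun p : En n × En n × En n × ℝ × ℝ => ‖p.1 - p.2.1‖)
    (by fun_prop) hφ hlim (fun k => (hbd' k (p k) (hpD k) (hpc k)).2.2.2.2.1)
  have hxz : ‖l.1 - l.2.2.1‖ = 0 := lim_sq_zero
    (F := fun p : En n × En n × En n × ℝ × ℝ => ‖p.1 - p.2.2.1‖)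
    (by fun_prop) hφ hlim (fun k => (hbd' k (p k) (hpD k) (hpc k)).2.2.2.2.2)
  obtain ⟨x, y, z, t, s⟩ := l
  have hxy' : x = y := by simpa [sub_eq_zero] using hxy
  have hxz' : x = z := by simpa [sub_eq_zero] using hxz
  subst hxy'
  subst hxz'
  have hval := lim_le (c := -c) (F := fun p : En n × En n × En n × ℝ × ℝ =>
      G p.2.2.2.2 * (u (p.1, p.2.2.2.1) - v p.2.2.1 + η * (p.2.2.2.1 - p.2.2.2.2))
      - (u (p.2.1, p.2.2.2.2) - v p.2.2.1) + ε * p.2.2.2.2)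
      (by fun_prop) hlim (Eventually.of_forall fun k => by
        have := hpc (φ k)
        simp only [hf] at this
        have h3 : 0 ≤ ((φ k : ℝ) + 1) * ‖(p (φ k)).1 - (p (φ k)).2.1‖ ^ 2 := by positivity
        have h4 : 0 ≤ ((φ k : ℝ) + 1) * ‖(p (φ k)).1 - (p (φ k)).2.2.1‖ ^ 2 := by positivity
        simp only [Function.comp]
        linarith)
  simp only at hval
  have hs0 : s₀ ≤ s := hlD.1
  have hst0 : s ≤ t := hlD.2
  have hεs0 : 0 ≤ ε * s := mul_nonneg hε.le (hs₀.trans hs0)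
  have hss : s₀ < s := by
    rcases hs0.lt_or_eq with h | h
    · exact h
    · exfalso
      have h1 := hnorm x t
      have h2 := hnorm x s
      have h3 : 0 ≤ η * (t - s) := mul_nonneg hη.le (sub_nonneg.2 hst0)
      have h4 := hG1 s
      rw [h] at hG0
      nlinarith
  have hst : s < t := by
    rcases hst0.lt_or_eq with h | h
    · exact h
    · exfalso
      subst h
      have h2 := hnorm x s
      have h4 := hG1 s
      rw [sub_self, mul_zero, add_zero] at hval
      nlinarith
  set a : ℕ → En n := fun m => (2 * ((m : ℝ) + 1)) • ((p m).2.1 - (p m).1) with ha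
  set q : ℕ → En n := fun m =>
    (2 * (((m : ℝ) + 1) / (G (p m).2.2.2.2 - 1))) • ((p m).2.2.1 - (p m).1) with hq
  have hpde : ∀ m, s₀ < (p m).2.2.2.2 → (p m).2.2.2.2 < (p m).2.2.2.1 →
      0 ≤ -η + H (p m).1 ((G (p m).2.2.2.2)⁻¹ • (a m + (G (p m).2.2.2.2 - 1) • q m))
        + u ((p m).1, (p m).2.2.2.1) - uo ((p m).1, (p m).2.2.2.1) ∧
      -κ * (G (p m).2.2.2.2 - 1) * (u ((p m).1, (p m).2.2.2.1) - v (p m).2.2.1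
          + η * ((p m).2.2.2.1 - (p m).2.2.2.2)) - η * G (p m).2.2.2.2 + ε
        + H (p m).2.1 (a m) + u ((p m).2.1, (p m).2.2.2.2) - uo ((p m).2.1, (p m).2.2.2.2) ≤ 0 ∧
      H (p m).2.2.1 (q m) ≤ 0 := by
    intro m htm hsm
    have hmin := hpm m
    simp only [ha, hq]
    generalize p m = r at htm hsm hmin
    obtain ⟨X, Y, Z, T, S⟩ := r
    simp only at htm hsm hmin ⊢
    have hGS := hG1 S
    have hG1ne : G S - 1 ≠ 0 := by linarith
    have hGne : G S ≠ 0 := by linarith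
    have hS0 : 0 < S := hs₀.trans_lt htm
    refine ⟨?_, ?_, ?_⟩
    · obtain ⟨k, hk⟩ : ∃ k : ℝ, k = -(((m : ℝ) + 1) / G S) := ⟨_, rfl⟩
      have hkG : G S * k = -((m : ℝ) + 1) := by rw [hk]; field_simp
      have hg : (G S)⁻¹ • ((2 * ((m : ℝ) + 1)) • (Y - X)
          + (G S - 1) • ((2 * (((m : ℝ) + 1) / (G S - 1))) • (Z - X)))
          = (2 * k) • (X - Y) + (2 * k) • (X - Z) := by
        rw [← neg_sub X Y, ← neg_sub X Z, smul_add, smul_smul, smul_smul, smul_smul, smul_neg,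
          smul_neg, ← neg_smul, ← neg_smul, hk]
        congr 2
        · field_simp
        · field_simp
      rw [hg]
      have hgr : HasGradientAt (fun y : En n => k * ‖y - Y‖ ^ 2 + k * ‖y - Z‖ ^ 2)
          ((2 * k) • (X - Y) + (2 * k) • (X - Z)) X := by
        have h1 := grad_sq k Y X
        have h2 := grad_sq k Z X
        rw [hasGradientAt_iff_hasFDerivAt] at h1 h2 ⊢
        rw [map_add]
        exact h1.add h2
      have hd1 : HasDerivAt (fun t' : ℝ => -η * t') (-η) T := by
        simpa using (hasDerivAt_id T).const_mul (-η)
      refine super_test hsup ((cd_sq k Y).add (cd_sq k Z)) (g := fun t' : ℝ => -η * t')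
        (by fun_prop) (hS0.trans hsm) hgr hd1 ?_
      have hev : ∀ᶠ r : En n × ℝ in 𝓝 (X, T), S < r.2 :=
        continuous_snd.continuousAt.eventually (lt_mem_nhds hsm)
      filter_upwards [hev] with r hr
      have := hmin (r.1, Y, Z, r.2, S) ⟨htm.le, hr.le⟩
      simp only [hf, ← neg_eq_iff_eq_neg.2 hkG] at this
      have hpos : 0 < G S := by linarith
      refine le_of_mul_le_mul_left ?_ hpos
      simp only [Prod.mk.eta] at this ⊢
      linarith
    · have hd1 : HasDerivAt (fun s' : ℝ => G s' * (u (X, T) - v Z + η * (T - s')) + ε * s')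
          (-κ * (G S - 1) * (u (X, T) - v Z + η * (T - S)) - η * G S + ε) S := by
        have h2 := ((hGd S).mul ((((hasDerivAt_id S).const_sub T).const_mul η).const_add
          (u (X, T) - v Z))).add ((hasDerivAt_id S).const_mul ε)
        exact h2.congr_deriv (by simp; ring)
      refine sub_test hsub (cd_sq ((m : ℝ) + 1) X)
        (g := fun s' : ℝ => G s' * (u (X, T) - v Z + η * (T - s')) + ε * s')
        (by fun_prop) hS0 (grad_sq _ X Y) hd1 ?_
      have hev : ∀ᶠ r : En n × ℝ in 𝓝 (Y, S), s₀ < r.2 :=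
        continuous_snd.continuousAt.eventually (lt_mem_nhds htm)
      have hev2 : ∀ᶠ r : En n × ℝ in 𝓝 (Y, S), r.2 < T :=
        continuous_snd.continuousAt.eventually (gt_mem_nhds hsm)
      filter_upwards [hev, hev2] with r hr hr2
      have := hmin (X, r.1, Z, T, r.2) ⟨hr.le, hr2.le⟩
      simp only [hf] at this
      rw [norm_sub_rev Y X, norm_sub_rev r.1 X]
      simp only [Prod.mk.eta] at this ⊢
      linarith
    · obtain ⟨k, hk⟩ : ∃ k : ℝ, k = ((m : ℝ) + 1) / (G S - 1) := ⟨_, rfl⟩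
      have hkG : (G S - 1) * k = (m : ℝ) + 1 := by rw [hk]; field_simp
      have := hvs (fun z' => k * ‖z' - X‖ ^ 2) (cd_sq k X) Z (by
        refine Eventually.of_forall fun z' => ?_
        have := hmin (X, Y, z', T, S) ⟨htm.le, hsm.le⟩
        simp only [hf, ← hkG] at this
        have hpos : 0 < G S - 1 := by linarith
        refine le_of_mul_le_mul_left ?_ hpos
        beta_reduce
        rw [norm_sub_rev Z X, norm_sub_rev z' X]
        linarith)
      rw [(grad_sq k X Z).gradient, hk] at this
      exact this
  have hev1 : ∀ᶠ k in atTop, s₀ < (p (φ k)).2.2.2.2 := by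
    have : Continuous fun p : En n × En n × En n × ℝ × ℝ => p.2.2.2.2 := by fun_prop
    exact ((this.tendsto _).comp hlim).eventually (lt_mem_nhds hss)
  have hev2 : ∀ᶠ k in atTop, (p (φ k)).2.2.2.2 < (p (φ k)).2.2.2.1 := by
    have : Continuous fun p : En n × En n × En n × ℝ × ℝ => p.2.2.2.1 - p.2.2.2.2 := by fun_prop
    have := ((this.tendsto _).comp hlim).eventually (lt_mem_nhds (sub_pos.2 hst))
    filter_upwards [this] with k hk
    exact sub_pos.1 hk
  obtain ⟨r, hr⟩ := hco (κ * (Gm - 1) * (2 * B + M) + η * Gm + 2 * B + 1)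
  obtain ⟨r', hr'⟩ := hco 1
  have hab : ∀ᶠ k in atTop, (a (φ k), q (φ k)) ∈
      Metric.closedBall (0 : En n) r ×ˢ Metric.closedBall (0 : En n) r' := by
    filter_upwards [hev1, hev2] with k h1 h2
    obtain ⟨-, h3, h4⟩ := hpde _ h1 h2
    constructor
    · rw [mem_closedBall_zero_iff]
      by_contra hcon
      push Not at hcon
      have h5 := hr (p (φ k)).2.1 (a (φ k)) hcon.le
      have h6 := (hbd' _ _ (hpD (φ k)) (hpc (φ k))).2.2.2.1
      have h7 := (abs_le.1 (hBu ((p (φ k)).2.1, (p (φ k)).2.2.2.2))).1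
      have h8 := (abs_le.1 (hBuo ((p (φ k)).2.1, (p (φ k)).2.2.2.2))).2
      have h9 := (abs_le.1 (hBu ((p (φ k)).1, (p (φ k)).2.2.2.1))).2
      have h10 := (abs_le.1 (hBv (p (φ k)).2.2.1)).1
      have h11 := hG1 (p (φ k)).2.2.2.2
      have h12 := hGm _ (hpD (φ k)).1
      have h13 : 0 ≤ 2 * B + M := by
        have : 0 ≤ η * ((p (φ k)).2.2.2.1 - (p (φ k)).2.2.2.2) :=
          mul_nonneg hη.le (sub_nonneg.2 h2.le)
        linarith
      have h14 : κ * (G (p (φ k)).2.2.2.2 - 1) * (u ((p (φ k)).1, (p (φ k)).2.2.2.1)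
          - v (p (φ k)).2.2.1 + η * ((p (φ k)).2.2.2.1 - (p (φ k)).2.2.2.2))
          ≤ κ * (Gm - 1) * (2 * B + M) := by
        calc _ ≤ κ * (G (p (φ k)).2.2.2.2 - 1) * (2 * B + M) := by
              apply mul_le_mul_of_nonneg_left (by linarith)
              exact mul_nonneg hκ (by linarith)
          _ ≤ _ := by gcongr
      have h15 : η * G (p (φ k)).2.2.2.2 ≤ η * Gm := by gcongr
      linarith
    · rw [mem_closedBall_zero_iff]
      by_contra hcon
      push Not at hcon
      have h5 := hr' (p (φ k)).2.2.1 (q (φ k)) hcon.le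
      linarith
  obtain ⟨⟨A, Q⟩, -, φ', hφ', hAQ⟩ :=
    ((isCompact_closedBall (0 : En n) r).prod (isCompact_closedBall (0 : En n) r')).tendsto_subseq'
      (x := fun k => (a (φ k), q (φ k))) hab.frequently
  have hlim2 : Tendsto (fun k => (p (φ (φ' k)), (a (φ (φ' k)), q (φ (φ' k))))) atTop
      (𝓝 ((x, x, x, t, s), (A, Q))) :=
    (hlim.comp hφ'.tendsto_atTop).prodMk_nhds hAQ
  have hev : ∀ᶠ k in atTop, s₀ < (p (φ (φ' k))).2.2.2.2 ∧
      (p (φ (φ' k))).2.2.2.2 < (p (φ (φ' k))).2.2.2.1 := by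
    filter_upwards [hφ'.tendsto_atTop.eventually hev1, hφ'.tendsto_atTop.eventually hev2]
      with k h1 h2 using ⟨h1, h2⟩
  have I1 := lim_le (c := 0) (F := fun r : (En n × En n × En n × ℝ × ℝ) × En n × En n =>
    -(-η + H r.1.1 ((G r.1.2.2.2.2)⁻¹ • (r.2.1 + (G r.1.2.2.2.2 - 1) • r.2.2))
        + u (r.1.1, r.1.2.2.2.1) - uo (r.1.1, r.1.2.2.2.1))) (by
      have h0 : Continuous fun r : (En n × En n × En n × ℝ × ℝ) × En n × En n =>
          (G r.1.2.2.2.2)⁻¹ :=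
        Continuous.inv₀ (by fun_prop) (fun r => by have := hG1 r.1.2.2.2.2; linarith)
      have h1 : Continuous fun r : (En n × En n × En n × ℝ × ℝ) × En n × En n =>
          H r.1.1 ((G r.1.2.2.2.2)⁻¹ • (r.2.1 + (G r.1.2.2.2.2 - 1) • r.2.2)) :=
        hHc.comp (f := fun r : (En n × En n × En n × ℝ × ℝ) × En n × En n =>
          (r.1.1, (G r.1.2.2.2.2)⁻¹ • (r.2.1 + (G r.1.2.2.2.2 - 1) • r.2.2))) (by fun_prop)
      fun_prop) hlim2 (by
        filter_upwards [hev] with k hk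
        have := (hpde _ hk.1 hk.2).1
        linarith)
  have I2 := lim_le (c := 0) (F := fun r : (En n × En n × En n × ℝ × ℝ) × En n × En n =>
      -κ * (G r.1.2.2.2.2 - 1) * (u (r.1.1, r.1.2.2.2.1) - v r.1.2.2.1
          + η * (r.1.2.2.2.1 - r.1.2.2.2.2)) - η * G r.1.2.2.2.2 + ε
        + H r.1.2.1 r.2.1 + u (r.1.2.1, r.1.2.2.2.2) - uo (r.1.2.1, r.1.2.2.2.2)) (by
      have h1 : Continuous fun r : (En n × En n × En n × ℝ × ℝ) × En n × En n =>
          H r.1.2.1 r.2.1 :=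
        hHc.comp (f := fun r : (En n × En n × En n × ℝ × ℝ) × En n × En n =>
          (r.1.2.1, r.2.1)) (by fun_prop)
      fun_prop) hlim2 (by
        filter_upwards [hev] with k hk
        exact (hpde _ hk.1 hk.2).2.1)
  have I3 := lim_le (c := 0) (F := fun r : (En n × En n × En n × ℝ × ℝ) × En n × En n =>
      H r.1.2.2.1 r.2.2) (hHc.comp (f := fun r : (En n × En n × En n × ℝ × ℝ) × En n × En n =>
          (r.1.2.2.1, r.2.2)) (by fun_prop)) hlim2 (by
        filter_upwards [hev] with k hk
        exact (hpde _ hk.1 hk.2).2.2)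
  simp only at I1 I2 I3
  have hGs := hG1 s
  have hGne : G s ≠ 0 := by linarith
  have hsnn : 0 ≤ s := hs₀.trans hs0
  have e1 := hdec x t (hsnn.trans hst0)
  have e2 := hdec x s hsnn
  have e3 : E * Real.exp (-2 * t) ≤ E * Real.exp (-2 * s) :=
    mul_le_mul_of_nonneg_left (Real.exp_le_exp.2 (by linarith)) hE
  have e4 : E * Real.exp (-2 * s) ≤ E * Real.exp (-2 * s₀) :=
    mul_le_mul_of_nonneg_left (Real.exp_le_exp.2 (by linarith)) hE
  have e1' := abs_le.1 e1
  have e2' := abs_le.1 e2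
  obtain ⟨W, hW⟩ : ∃ W, W = (G s)⁻¹ • (A + (G s - 1) • Q) := ⟨_, rfl⟩
  rw [← hW] at I1
  have J := hA x (W - Q) Q (by rw [sub_add_cancel]; linarith) I3 (G s)⁻¹ (by positivity)
    (inv_le_one_of_one_le₀ hGs.le)
  have hWA : ((G s)⁻¹)⁻¹ • (W - Q) + Q = A := by
    rw [inv_inv, hW, smul_sub, smul_smul, mul_inv_cancel₀ hGne, one_smul, sub_smul, one_smul]
    abel
  rw [hWA, sub_add_cancel] at J
  have J2 : G s * H x W + ψ * (G s - 1) ≤ H x A := by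
    have h1 := mul_le_mul_of_nonneg_left J (by linarith : (0 : ℝ) ≤ G s)
    have h2 : G s * ((G s)⁻¹ * H x A) = H x A := by field_simp
    have h3 : G s * (H x W + ψ * (1 - (G s)⁻¹)) = G s * H x W + ψ * (G s - 1) := by field_simp
    linarith
  obtain ⟨e, he⟩ : ∃ e, e = E * Real.exp (-2 * s) := ⟨_, rfl⟩
  have hf1 := hfin s hs0
  rw [← he] at hf1 e3 e2'
  have J3 : G s * (η - e) ≤ G s * H x W :=
    mul_le_mul_of_nonneg_left (by linarith) (by linarith)
  obtain ⟨L, hL⟩ : ∃ L, L = u (x, t) - v x + η * (t - s) := ⟨_, rfl⟩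
  rw [← hL] at I2 hval
  have hL0 : 0 ≤ L := by
    have := (hnorm x t).1
    have : 0 ≤ η * (t - s) := mul_nonneg hη.le (sub_nonneg.2 hst0)
    linarith
  have hLC : L ≤ C := by
    have := (hnorm x s).2
    nlinarith
  have J4 : κ * (G s - 1) * L ≤ κ * (G s - 1) * C :=
    mul_le_mul_of_nonneg_left hLC (mul_nonneg hκ (by linarith))
  linarith

lemma A8minus_nonneg {n : ℕ} (hn : 1 ≤ n) {H : En n → En n → ℝ}
    (hHc : Continuous fun q : En n × En n => H q.1 q.2) (hco : Coercive H) {η₀ : ℝ}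
    (hη₀ : 0 < η₀) (hA : A8minus H η₀) (x P : En n) : 0 ≤ H x P := by
  by_contra hneg
  push Not at hneg
  obtain ⟨r, hr⟩ := hco 1
  have : Nonempty (Fin n) := ⟨⟨0, hn⟩⟩
  obtain ⟨q, hq⟩ := NormedSpace.exists_lt_norm ℝ (En n) r
  have hq1 := hr x q hq.le
  obtain ⟨ψ, hψ, hAt⟩ := hA (min η₀ (-H x P)) (lt_min hη₀ (by linarith)) (min_le_left _ _)
  have key : ∀ k : ℕ, H x (((k : ℝ) + 1)⁻¹ • (P - q) + q) ≤ 0 := by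
    intro k
    have hk : (0 : ℝ) ≤ k := Nat.cast_nonneg k
    have h := hAt x (P - q) q (by
      rw [sub_add_cancel]
      have := min_le_right η₀ (-H x P)
      linarith) (by linarith) ((k : ℝ) + 1) (by linarith)
    rw [sub_add_cancel] at h
    have h2 : 0 ≤ ψ * ((k : ℝ) + 1 - 1) / ((k : ℝ) + 1) := by
      rw [add_sub_cancel_right]; positivity
    by_contra hcon
    push Not at hcon
    have : 0 < ((k : ℝ) + 1) * H x (((k : ℝ) + 1)⁻¹ • (P - q) + q) := by positivity
    linarith
  have hlim : Tendsto (fun k : ℕ => ((k : ℝ) + 1)⁻¹) atTop (𝓝 0) :=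
    tendsto_inv_atTop_zero.comp
      (tendsto_atTop_add_const_right _ _ tendsto_natCast_atTop_atTop)
  have := lim_le (c := 0) (F := fun e : ℝ => H x (e • (P - q) + q))
    (hHc.comp (f := fun e : ℝ => (x, e • (P - q) + q)) (by fun_prop)) hlim
    (Eventually.of_forall key)
  simp only [zero_smul, zero_add] at this
  linarith

lemma exp_neg_two_tendsto : Tendsto (fun s : ℝ => Real.exp (-2 * s)) atTop (𝓝 0) := by
  apply Real.tendsto_exp_atBot.comp
  exact Tendsto.const_mul_atTop_of_neg (by norm_num) tendsto_id

lemma plus_tendsto {n : ℕ} {H : En n → En n → ℝ} {v : En n → ℝ} {u uo : En n × ℝ → ℝ}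
    {B C E η ψ : ℝ}
    (hHc : Continuous fun q : En n × En n => H q.1 q.2) (hco : Coercive H)
    (hv : Continuous v) (hvp : ZPeriodic v) (hvs : SingleSub H v 0)
    (hu : Continuous u) (huo : Continuous uo) (hup : ZPeriodicST u)
    (hBv : ∀ x, |v x| ≤ B) (hBu : ∀ q, |u q| ≤ B) (hBuo : ∀ q, |uo q| ≤ B)
    (hnorm : ∀ x t, 1 ≤ u (x, t) - v x ∧ u (x, t) - v x ≤ C)
    (hsub : EvolSubIneq H u uo) (hsup : EvolSuperIneq H u uo)
    (hdec : ∀ x t, 0 ≤ t → |u (x, t) - uo (x, t)| ≤ E * Real.exp (-2 * t))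
    (hE : 0 ≤ E) (hη : 0 < η) (hψ : 0 < ψ) (hA : A8plusAt H (η / 2) ψ) :
    Tendsto (alphaPlus u v η) atTop (𝓝 1) := by
  have hC : 1 ≤ C := (hnorm 0 0).1.trans (hnorm 0 0).2
  have hC0 : 0 < C := by linarith
  obtain ⟨κ, hκ, hκ2, hκC⟩ : ∃ κ : ℝ, 0 < κ ∧ κ ≤ 2 ∧ κ * C ≤ ψ / 2 := by
    refine ⟨min 2 (ψ / 2 / C), lt_min two_pos (by positivity), min_le_left _ _, ?_⟩
    rw [← le_div_iff₀ hC0]; exact min_le_right _ _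
  have hlimE : ∀ c : ℝ, Tendsto (fun s : ℝ => c * Real.exp (-2 * s)) atTop (𝓝 0) := by
    intro c; simpa using exp_neg_two_tendsto.const_mul c
  obtain ⟨s₀, hs₀, hs1, hs2⟩ : ∃ s₀ : ℝ, 0 ≤ s₀ ∧ E * Real.exp (-2 * s₀) ≤ η / 2 ∧
      ((2 + C) * E) * Real.exp (-2 * s₀) ≤ ψ * C / 2 :=
    ((eventually_ge_atTop 0).and (((hlimE E).eventually (ge_mem_nhds (by positivity))).and
      ((hlimE ((2 + C) * E)).eventually (ge_mem_nhds (by positivity))))).exists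
  set G : ℝ → ℝ := fun s => 1 + C * Real.exp (-κ * (s - s₀)) with hG
  have hG1 : ∀ s, 1 < G s := fun s => by simp only [hG]; have := Real.exp_pos (-κ * (s - s₀)); nlinarith
  have hGm : ∀ s, s₀ ≤ s → G s ≤ 1 + C := by
    intro s hs
    have : Real.exp (-κ * (s - s₀)) ≤ 1 := Real.exp_le_one_iff.2 (by nlinarith)
    simp only [hG]; nlinarith
  have hkey := fun (x : En n) (s t : ℝ) (hs : s₀ ≤ s) (ht : s ≤ t) =>
    key_plus (G := G) (κ := κ) (s₀ := s₀) (Gm := 1 + C) hHc hco hv hvp hvs hu huo hup hBv hBu hBuo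
      hnorm hsub hsup hdec hE hη hA hκ.le hs₀ hs1 (by rw [hG]; fun_prop) (by
        intro s
        have h1 : HasDerivAt (fun s' : ℝ => -κ * (s' - s₀)) (-κ) s := by
          simpa using ((hasDerivAt_id s).sub_const s₀).const_mul (-κ)
        have h2 := (h1.exp.const_mul C).const_add 1
        exact h2.congr_deriv (by simp only [hG]; ring)) hG1 hGm
      (by simp [hG]) (by
        intro s hs
        have h1 := hG1 s
        have h2 : (G s + 1) * (E * Real.exp (-2 * s)) ≤ (2 + C) * (E * Real.exp (-2 * s)) := by
          have := hGm s hs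
          have h3 : 0 ≤ E * Real.exp (-2 * s) := by positivity
          nlinarith
        have h3 : Real.exp (-2 * s) = Real.exp (-2 * s₀) * Real.exp (-2 * (s - s₀)) := by
          rw [← Real.exp_add]; congr 1; ring
        have h4 : Real.exp (-2 * (s - s₀)) ≤ Real.exp (-κ * (s - s₀)) :=
          Real.exp_le_exp.2 (by nlinarith)
        have h5 : (2 + C) * (E * Real.exp (-2 * s)) ≤ ψ * C / 2 * Real.exp (-κ * (s - s₀)) := by
          calc (2 + C) * (E * Real.exp (-2 * s))
              = ((2 + C) * E * Real.exp (-2 * s₀)) * Real.exp (-2 * (s - s₀)) := by rw [h3]; ring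
            _ ≤ _ := mul_le_mul hs2 h4 (Real.exp_pos _).le (by positivity)
        have h6 : ψ * C / 2 * Real.exp (-κ * (s - s₀)) = ψ / 2 * (G s - 1) := by
          simp only [hG]; ring
        have h7 : κ * C * (G s - 1) ≤ ψ / 2 * (G s - 1) :=
          mul_le_mul_of_nonneg_right hκC (by linarith)
        linarith) x hs ht
  have hGlim : Tendsto (fun s => (G s)⁻¹) atTop (𝓝 1) := by
    have h1 : Tendsto (fun s : ℝ => Real.exp (-κ * (s - s₀))) atTop (𝓝 0) :=
      Real.tendsto_exp_atBot.comp (Tendsto.const_mul_atTop_of_neg (by linarith)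
        (tendsto_atTop_add_const_right _ (-s₀) tendsto_id))
    have h2 : Tendsto G atTop (𝓝 1) := by
      have h3 := (h1.const_mul C).const_add 1
      rw [mul_zero, add_zero] at h3
      exact h3
    simpa using h2.inv₀ one_ne_zero
  refine tendsto_of_tendsto_of_tendsto_of_le_of_le' hGlim tendsto_const_nhds ?_ ?_
  · filter_upwards [eventually_ge_atTop s₀] with s hs
    refine le_csInf ⟨_, 0, s, le_rfl, rfl⟩ ?_
    rintro r ⟨x, t, hst, rfl⟩
    have h1 := (hnorm x s).1
    have h2 := hkey x s t hs hst
    have h3 := hG1 s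
    have h4 : 0 < G s := by linarith
    rw [le_div_iff₀ (by linarith), inv_mul_le_iff₀ h4]
    exact h2
  · filter_upwards with s
    refine csInf_le ⟨0, ?_⟩ ⟨0, s, le_rfl, ?_⟩
    · rintro r ⟨x, t, hst, rfl⟩
      have h1 := (hnorm x s).1
      have h2 := (hnorm x t).1
      have h3 : 0 ≤ η * (t - s) := mul_nonneg hη.le (sub_nonneg.2 hst)
      exact div_nonneg (by linarith) (by linarith)
    · have h1 := (hnorm 0 s).1
      rw [sub_self, mul_zero, add_zero, div_self (by linarith)]

lemma minus_tendsto {n : ℕ} {H : En n → En n → ℝ} {v : En n → ℝ} {u uo : En n × ℝ → ℝ}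
    {B C E η : ℝ}
    (hu : Continuous u) (hBu : ∀ q, |u q| ≤ B)
    (hnorm : ∀ x t, 1 ≤ u (x, t) - v x ∧ u (x, t) - v x ≤ C)
    (hsub : EvolSubIneq H u uo) (hH : ∀ x p, 0 ≤ H x p)
    (hdec : ∀ x t, 0 ≤ t → |u (x, t) - uo (x, t)| ≤ E * Real.exp (-2 * t))
    (hE : 0 ≤ E) (hη : 0 < η) :
    Tendsto (alphaMinus u v η) atTop (𝓝 1) := by
  have hlim : Tendsto (fun s : ℝ => 1 + E / 2 * Real.exp (-2 * s)) atTop (𝓝 1) := by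
    simpa using (exp_neg_two_tendsto.const_mul (E / 2)).const_add 1
  have hb : ∀ s, 0 ≤ s → ∀ r ∈ {r : ℝ | ∃ (x : En n) (t : ℝ), s ≤ t ∧
      r = (u (x, t) - v x - η * (t - s)) / (u (x, s) - v x)}, r ≤ 1 + E / 2 * Real.exp (-2 * s) := by
    rintro s hs r ⟨x, t, hst, rfl⟩
    have h1 := (hnorm x s).1
    have h3 : 0 ≤ η * (t - s) := mul_nonneg hη.le (sub_nonneg.2 hst)
    have h2 := mono_time hu hBu hsub hH hE
      (fun x t ht => by have := (abs_le.1 (hdec x t ht)).1; linarith) x hs hst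
    have h4 : 0 ≤ E / 2 * Real.exp (-2 * s) := by positivity
    rw [div_le_iff₀ (by linarith)]
    nlinarith
  refine tendsto_of_tendsto_of_tendsto_of_le_of_le' tendsto_const_nhds hlim ?_ ?_
  · filter_upwards [eventually_ge_atTop 0] with s hs
    refine le_csSup ⟨_, hb s hs⟩ ⟨0, s, le_rfl, ?_⟩
    have h1 := (hnorm 0 s).1
    rw [sub_self, mul_zero, sub_zero, div_self (by linarith)]
  · filter_upwards [eventually_ge_atTop 0] with s hs
    exact csSup_le ⟨_, 0, s, le_rfl, rfl⟩ (hb s hs)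

lemma alphaPlus_ext {n : ℕ} (u : En n × ℝ → ℝ) (v : En n → ℝ) (η : ℝ) :
    alphaPlus (extU u) v η =ᶠ[atTop] alphaPlus u v η := by
  filter_upwards [eventually_ge_atTop 0] with s hs
  unfold alphaPlus
  congr 1
  ext r
  constructor <;> rintro ⟨x, t, hst, rfl⟩ <;> refine ⟨x, t, hst, ?_⟩ <;>
    rw [extU_eq u x hs, extU_eq u x (hs.trans hst)]

lemma alphaMinus_ext {n : ℕ} (u : En n × ℝ → ℝ) (v : En n → ℝ) (η : ℝ) :
    alphaMinus (extU u) v η =ᶠ[atTop] alphaMinus u v η := by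
  filter_upwards [eventually_ge_atTop 0] with s hs
  unfold alphaMinus
  congr 1
  ext r
  constructor <;> rintro ⟨x, t, hst, rfl⟩ <;> refine ⟨x, t, hst, ?_⟩ <;>
    rw [extU_eq u x hs, extU_eq u x (hs.trans hst)]

/-- Lemma 5.4: `α_η^± (s), β_η^± (s) → 1` as `s → ∞`. -/
theorem stmt16 (n : ℕ) (hn : 1 ≤ n) (H : En n → En n → ℝ)
    (hHcont : Continuous fun q : En n × En n => H q.1 q.2)
    (hHper : ZPeriodicH H) (hHcoer : Coercive H)
    (v : En n → ℝ) (hvlip : IsLip v) (hvper : ZPeriodic v)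
    (hverg : SingleSolution H v 0)
    (u₀₁ u₀₂ : En n → ℝ) (hu₀₁ : IsLip u₀₁) (hu₀₂ : IsLip u₀₂)
    (hu₀₁per : ZPeriodic u₀₁) (hu₀₂per : ZPeriodic u₀₂)
    (u₁ u₂ : En n × ℝ → ℝ) (hu₁per : ZPeriodicST u₁) (hu₂per : ZPeriodicST u₂)
    (hsol : SysSolution H H u₀₁ u₀₂ u₁ u₂)
    (C : ℝ)
    (hnorm : ∀ (x : En n) (t : ℝ), 0 ≤ t →
      (1 ≤ u₁ (x, t) - v x ∧ u₁ (x, t) - v x ≤ C) ∧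
      (1 ≤ u₂ (x, t) - v x ∧ u₂ (x, t) - v x ≤ C))
    (η₀ : ℝ) (hη₀ : 0 < η₀) :
    (A8plus H η₀ → ∀ η : ℝ, 0 < η → η ≤ η₀ →
      Tendsto (alphaPlus u₁ v η) atTop (nhds 1) ∧
      Tendsto (alphaPlus u₂ v η) atTop (nhds 1)) ∧
    (A8minus H η₀ → ∀ η : ℝ, 0 < η → η ≤ η₀ →
      Tendsto (alphaMinus u₁ v η) atTop (nhds 1) ∧
      Tendsto (alphaMinus u₂ v η) atTop (nhds 1)) := by
  obtain ⟨hvc, hvs, -⟩ := hverg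
  obtain ⟨hc₁, hc₂, ⟨hb₁, hb₂⟩, ⟨hp₁, hp₂⟩, -, -⟩ := hsol
  obtain ⟨Bv, hBv0, hBv⟩ := per_bdd hvc hvper
  have hC : 1 ≤ C := (hnorm 0 0 le_rfl).1.1.trans (hnorm 0 0 le_rfl).1.2
  have hC0 : 0 ≤ C := by linarith
  have hn₁ : ∀ x t, 1 ≤ extU u₁ (x, t) - v x ∧ extU u₁ (x, t) - v x ≤ C :=
    fun x t => (hnorm x _ (le_max_right t 0)).1
  have hn₂ : ∀ x t, 1 ≤ extU u₂ (x, t) - v x ∧ extU u₂ (x, t) - v x ≤ C :=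
    fun x t => (hnorm x _ (le_max_right t 0)).2
  have hbv : ∀ x, |v x| ≤ Bv + C := fun x => (hBv x).trans (by linarith)
  have hbu₁ : ∀ q, |extU u₁ q| ≤ Bv + C := by
    rintro ⟨x, t⟩
    have h1 := hn₁ x t
    have h2 := abs_le.1 (hBv x)
    exact abs_le.2 ⟨by linarith, by linarith⟩
  have hbu₂ : ∀ q, |extU u₂ q| ≤ Bv + C := by
    rintro ⟨x, t⟩
    have h1 := hn₂ x t
    have h2 := abs_le.1 (hBv x)
    exact abs_le.2 ⟨by linarith, by linarith⟩
  have hC₁ := extU_cont hc₁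
  have hC₂ := extU_cont hc₂
  have hP₁ := extU_per hu₁per
  have hP₂ := extU_per hu₂per
  have hS₁ := extU_sub hb₁
  have hS₂ := extU_sub hb₂
  have hT₁ := extU_super hp₁
  have hT₂ := extU_super hp₂
  have hd₁ : ∀ x t, 0 ≤ t → extU u₁ (x, t) - extU u₂ (x, t) ≤ C * Real.exp (-2 * t) :=
    fun x t ht => decay hHcont hHcoer hC₁ hC₂ hP₁ hP₂ hbu₁ hbu₂ hS₁ hT₂ hC0
      (fun x => by have h1 := hn₁ x 0; have h2 := hn₂ x 0; linarith) x ht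
  have hd₂ : ∀ x t, 0 ≤ t → extU u₂ (x, t) - extU u₁ (x, t) ≤ C * Real.exp (-2 * t) :=
    fun x t ht => decay hHcont hHcoer hC₂ hC₁ hP₂ hP₁ hbu₂ hbu₁ hS₂ hT₁ hC0
      (fun x => by have h1 := hn₁ x 0; have h2 := hn₂ x 0; linarith) x ht
  have hD₁ : ∀ x t, 0 ≤ t → |extU u₁ (x, t) - extU u₂ (x, t)| ≤ C * Real.exp (-2 * t) :=
    fun x t ht => abs_le.2 ⟨by have := hd₂ x t ht; linarith, hd₁ x t ht⟩
  have hD₂ : ∀ x t, 0 ≤ t → |extU u₂ (x, t) - extU u₁ (x, t)| ≤ C * Real.exp (-2 * t) :=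
    fun x t ht => abs_le.2 ⟨by have := hd₁ x t ht; linarith, hd₂ x t ht⟩
  constructor
  · intro hA η hη hle
    obtain ⟨ψ, hψ, hAt⟩ := hA (η / 2) (by linarith) (by linarith)
    exact ⟨(plus_tendsto hHcont hHcoer hvc hvper hvs hC₁ hC₂ hP₁ hbv hbu₁ hbu₂ hn₁ hS₁ hT₁ hD₁
        hC0 hη hψ hAt).congr' (alphaPlus_ext _ _ _),
      (plus_tendsto hHcont hHcoer hvc hvper hvs hC₂ hC₁ hP₂ hbv hbu₂ hbu₁ hn₂ hS₂ hT₂ hD₂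
        hC0 hη hψ hAt).congr' (alphaPlus_ext _ _ _)⟩
  · intro hA η hη hle
    have hH := A8minus_nonneg hn hHcont hHcoer hη₀ hA
    exact ⟨(minus_tendsto hC₁ hbu₁ hn₁ hS₁ hH hD₁ hC0 hη).congr' (alphaMinus_ext _ _ _),
      (minus_tendsto hC₂ hbu₂ hn₂ hS₂ hH hD₂ hC0 hη).congr' (alphaMinus_ext _ _ _)⟩
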